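/- arXiv:1203.3187 — 2 statements merged into one kernel-verified Lean document; each statement's English description precedes it below -/
import Mathlib

section
/- Let n ≥ 1 and 1 ≤ m ≤ n, and let 1 ≤ k_1 < … < k_m ≤ n. Then, as an identity of polynomials in ℤ[x,y,z_1,…,z_m]: ∏_{1≤i<j≤m} (z_i − z_j) · ∏_{i=1}^{m−1} Z_{n−i}(x,y) · Z^{k_1,…,k_m}_n( x, y; z_1,…,z_m; x·z_1²+(y−x−1)·z_1+1, …, x·z_m²+(y−x−1)·z_m+1 ) = det_{1≤i,j≤m}( z_i^{j−1}·(z_i−1)^{m−j}·Z_{n−j+1}(x,y;z_i) ). In particular, for fixed n and m the left-hand side is independent of the choice of rows k_1,…,k_m. -/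
open Finset

/-- The `n × n` integer matrix encoded by `e`, with entries in `{-1, 0, 1}`. -/
def asmMat {n : ℕ} (e : Fin n → Fin n → Fin 3) : Fin n → Fin n → ℤ :=
  fun i j => (e i j : ℤ) - 1

/-- `A` is an alternating sign matrix: all entries lie in `{-1, 0, 1}`, every
partial row sum and every partial column sum is `0` or `1` (equivalently, the
nonzero entries of each row and of each column alternate in sign), and every
complete row sum and column sum is `1`. -/
def IsASM {n : ℕ} (A : Fin n → Fin n → ℤ) : Prop :=
  (∀ i j, A i j = -1 ∨ A i j = 0 ∨ A i j = 1) ∧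
  (∀ (i j : Fin n), (∑ j' ∈ univ.filter (fun j' : Fin n => j' ≤ j), A i j') = 0 ∨
    (∑ j' ∈ univ.filter (fun j' : Fin n => j' ≤ j), A i j') = 1) ∧
  (∀ (i j : Fin n), (∑ i' ∈ univ.filter (fun i' : Fin n => i' ≤ i), A i' j) = 0 ∨
    (∑ i' ∈ univ.filter (fun i' : Fin n => i' ≤ i), A i' j) = 1) ∧
  (∀ i : Fin n, (∑ j, A i j) = 1) ∧
  (∀ j : Fin n, (∑ i, A i j) = 1)

/-- `ν(A)`, the number of generalized inversions of `A`. -/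
def nuASM {n : ℕ} (A : Fin n → Fin n → ℤ) : ℕ :=
  (∑ i : Fin n, ∑ i' : Fin n, ∑ j : Fin n, ∑ j' : Fin n,
      if i < i' ∧ j' ≤ j then A i j * A i' j' else 0).toNat

/-- `μ(A)`, the number of entries of `A` equal to `-1`. -/
def muASM {n : ℕ} (A : Fin n → Fin n → ℤ) : ℕ :=
  (univ.filter (fun p : Fin n × Fin n => A p.1 p.2 = -1)).card

/-- `ρT(A)`, the number of `0`'s to the left of the `1` in the top row of `A`. -/
def rhoT {n : ℕ} (A : Fin n → Fin n → ℤ) : ℕ :=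
  (univ.filter (fun j : Fin n =>
    A ⟨0, j.pos⟩ j = 0 ∧ ∃ j' : Fin n, j < j' ∧ A ⟨0, j.pos⟩ j' = 1)).card

/-- `ρR(A)`, the number of `0`'s below the `1` in the right-most column of `A`. -/
def rhoR {n : ℕ} (A : Fin n → Fin n → ℤ) : ℕ :=
  (univ.filter (fun i : Fin n =>
    A i ⟨n - 1, Nat.sub_lt i.pos Nat.one_pos⟩ = 0 ∧
      ∃ i' : Fin n, i' < i ∧ A i' ⟨n - 1, Nat.sub_lt i.pos Nat.one_pos⟩ = 1)).card

/-- `ρB(A)`, the number of `0`'s to the right of the `1` in the bottom row of `A`. -/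
def rhoB {n : ℕ} (A : Fin n → Fin n → ℤ) : ℕ :=
  (univ.filter (fun j : Fin n =>
    A ⟨n - 1, Nat.sub_lt j.pos Nat.one_pos⟩ j = 0 ∧
      ∃ j' : Fin n, j' < j ∧ A ⟨n - 1, Nat.sub_lt j.pos Nat.one_pos⟩ j' = 1)).card

/-- `ρL(A)`, the number of `0`'s above the `1` in the left-most column of `A`. -/
def rhoL {n : ℕ} (A : Fin n → Fin n → ℤ) : ℕ :=
  (univ.filter (fun i : Fin n =>
    A i ⟨0, i.pos⟩ = 0 ∧ ∃ i' : Fin n, i < i' ∧ A i' ⟨0, i.pos⟩ = 1)).card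

open Classical in
/-- The quadruply-refined ASM generating function
`Zqua_n(x,y;z1,z2,z3,z4) = Σ_A x^{ν(A)} y^{μ(A)} z1^{ρT(A)} z2^{ρR(A)} z3^{ρB(A)} z4^{ρL(A)}`. -/
noncomputable def Zqua (n : ℕ) {R : Type*} [CommRing R] (x y z1 z2 z3 z4 : R) : R :=
  ∑ e : Fin n → Fin n → Fin 3,
    if IsASM (asmMat e) then
      x ^ nuASM (asmMat e) * y ^ muASM (asmMat e) * z1 ^ rhoT (asmMat e) *
        z2 ^ rhoR (asmMat e) * z3 ^ rhoB (asmMat e) * z4 ^ rhoL (asmMat e)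
    else 0

/-- Adjacent-boundary doubly-refined generating function `Zadj_n(x,y;z1,z2)`. -/
noncomputable def Zadj (n : ℕ) {R : Type*} [CommRing R] (x y z1 z2 : R) : R :=
  Zqua n x y z1 1 1 z2

/-- Alternative adjacent-boundary doubly-refined generating function `Zbaradj_n(x,y;z1,z2)`. -/
noncomputable def Zbaradj (n : ℕ) {R : Type*} [CommRing R] (x y z1 z2 : R) : R :=
  Zqua n x y z1 z2 1 1

/-- Triply-refined generating function `Ztri_n(x,y;z1,z2,z3)`. -/
noncomputable def Ztri (n : ℕ) {R : Type*} [CommRing R] (x y z1 z2 z3 : R) : R :=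
  Zqua n x y z1 1 z2 z3

/-- Opposite-boundary doubly-refined generating function `Zopp_n(x,y;z1,z2)`. -/
noncomputable def Zopp (n : ℕ) {R : Type*} [CommRing R] (x y z1 z2 : R) : R :=
  Zqua n x y z1 1 z2 1

/-- Singly-refined generating function `Z_n(x,y;z)`. -/
noncomputable def Zsing (n : ℕ) {R : Type*} [CommRing R] (x y z : R) : R :=
  Zqua n x y z 1 1 1

/-- Unrefined generating function `Z_n(x,y)`.  Note `Zun 0 x y = 1`. -/
noncomputable def Zun (n : ℕ) {R : Type*} [CommRing R] (x y : R) : R :=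
  Zqua n x y 1 1 1 1


/-- `ν^{row r}(A)`, the number of columns `j` such that the partial column sum
of column `j` strictly above row `r` equals the partial row sum of row `r` up
to (and including) column `j`. -/
def nuRow {n : ℕ} (A : Fin n → Fin n → ℤ) (r : Fin n) : ℕ :=
  (univ.filter (fun j : Fin n =>
    (∑ i' ∈ univ.filter (fun i' : Fin n => i' < r), A i' j) =
      ∑ j' ∈ univ.filter (fun j' : Fin n => j' ≤ j), A r j')).card

/-- `μ^{row r}(A)`, the number of entries equal to `-1` in row `r` of `A`. -/
def muRow {n : ℕ} (A : Fin n → Fin n → ℤ) (r : Fin n) : ℕ :=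
  (univ.filter (fun j : Fin n => A r j = -1)).card

open Classical in
/-- The multi-row ASM generating function
`Z^{k_1,…,k_m}_n(x,y;z_1,…,z_m;w_1,…,w_m)
  = Σ_A x^{ν(A)} y^{μ(A) − Σ_i μ^{row k_i}(A)} ∏_i z_i^{ν^{row k_i}(A)} w_i^{μ^{row k_i}(A)}`. -/
noncomputable def Zmulti (n m : ℕ) (k : Fin m → Fin n) {R : Type*} [CommRing R]
    (x y : R) (z w : Fin m → R) : R :=
  ∑ e : Fin n → Fin n → Fin 3,
    if IsASM (asmMat e) then
      x ^ nuASM (asmMat e) *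
        y ^ (muASM (asmMat e) - ∑ i : Fin m, muRow (asmMat e) (k i)) *
        ∏ i : Fin m, z i ^ nuRow (asmMat e) (k i) * w i ^ muRow (asmMat e) (k i)
    else 0

/-!
Alternating sign matrices are six-vertex configurations with domain-wall boundary. At the given
weight `w i` of an entry `-1`, the multi-row generating function is a partition function in which
the `i`th chosen row has the spectral parameter `z i` and every other row has the parameter `1`.
The row transfer operators obey exchange relations, so the partition function is symmetric in its
parameters, which gives the independence of the rows, and the algebraic Bethe ansatz expands it in
partition functions of size one less. By this recursion the partition function, times the
Vandermonde determinant of the inverse parameters, is a determinant whose row `i` depends only on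
the `i`th parameter. For any such determinant, bordering its rows at the parameters
`t 0, t 1, …, t (N - 1)` by the rows at `z 0, …, z (m - 1)` gives a determinant of singly bordered
determinants. Clearing denominators there yields a polynomial identity, in which all `t l` may be
set to `1`.
-/

namespace SixVertex

variable {R : Type*} [CommRing R]

/-- The integer in `{-1, 0, 1}` encoded by an element of `Fin 3`, as in `asmMat`. -/
def entry (a : Fin 3) : ℤ := (a : ℤ) - 1

/-- The sum of `r` up to and including the position `j`. For a row of an alternating sign matrix
it is the state of the horizontal edge to the right of column `j`. -/
def partialSum {n : ℕ} (r : Fin n → ℤ) (j : Fin n) : ℤ :=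
  ∑ j' ∈ univ.filter (fun j' : Fin n => j' ≤ j), r j'

/-- The sum of column `j` strictly above row `i`. For an alternating sign matrix it is the state
of the vertical edge above the entry `(i, j)`. -/
def columnSumAbove {N n : ℕ} (A : Fin N → Fin n → ℤ) (i : Fin N) (j : Fin n) : ℤ :=
  ∑ i' ∈ univ.filter (fun i' : Fin N => i' < i), A i' j

/-- The weight of an entry `-1` in a row with spectral parameter `z`. -/
def minusWeight (x y z : R) : R := x * z ^ 2 + (y - x - 1) * z + 1

/-- The six-vertex weight of a matrix entry `r` with partial column sum `c` above it and
partial row sum `h` up to and including it, in a row with spectral parameter `z`. It vanishes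
unless the states of the adjacent edges are `0` or `1`. -/
def vertexWeight (x y z : R) (h c r : ℤ) : R :=
  if (h = 0 ∨ h = 1) ∧ (c = 0 ∨ c = 1) ∧ (c + r = 0 ∨ c + r = 1) then
    (if c = 1 ∧ h = 1 then x else 1) * (if c = h then z else 1) *
      (if r = -1 then minusWeight x y z else 1)
  else 0

/-- The weight of a row `r` below column sums `c`, with the state `h` of the leftmost horizontal
edge and the state `1` of the rightmost one. -/
def rowWeight {n : ℕ} (x y z : R) (h : ℤ) (c r : Fin n → ℤ) : R :=
  (∏ j, vertexWeight x y z (h + partialSum r j) (c j) (r j)) * if h + ∑ j, r j = 1 then 1 else 0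

lemma rowWeight_cons {n : ℕ} (x y z : R) (h c₀ r₀ : ℤ) (c r : Fin n → ℤ) :
    rowWeight x y z h (Fin.cons c₀ c : Fin (n + 1) → ℤ) (Fin.cons r₀ r : Fin (n + 1) → ℤ) =
      vertexWeight x y z (h + r₀) c₀ r₀ * rowWeight x y z (h + r₀) c r := by
  unfold rowWeight partialSum
  rw [Fin.prod_univ_succ, Fin.sum_univ_succ]
  simp only [Finset.sum_filter, Fin.sum_univ_succ, Fin.cons_zero, Fin.cons_succ, Fin.le_zero_iff,
    Fin.succ_ne_zero, Fin.zero_le, Fin.succ_le_succ_iff, if_true, if_false, add_assoc,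
    Finset.sum_const_zero, add_zero, mul_assoc]

/-! ### Transfer operators -/

/-- The row transfer operator on functions of the column sums, with the state `h` of the leftmost
horizontal edge: `transfer n x y z 0` and `transfer n x y z 1` are the operators `B(z)` and `D(z)`
of the algebraic Bethe ansatz. -/
def transfer (n : ℕ) (x y z : R) (h : ℤ) : ((Fin n → ℤ) → R) →ₗ[R] ((Fin n → ℤ) → R) where
  toFun ψ c := ∑ r : Fin n → Fin 3,
    rowWeight x y z h (c - entry ∘ r) (entry ∘ r) * ψ (c - entry ∘ r)
  map_add' ψ φ := by
    funext c
    simp [mul_add, Finset.sum_add_distrib]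
  map_smul' a ψ := by
    funext c
    simp [Finset.mul_sum, mul_left_comm]

lemma transfer_apply (n : ℕ) (x y z : R) (h : ℤ) (ψ : (Fin n → ℤ) → R) (c : Fin n → ℤ) :
    transfer n x y z h ψ c = ∑ r : Fin n → Fin 3,
      rowWeight x y z h (c - entry ∘ r) (entry ∘ r) * ψ (c - entry ∘ r) := rfl

lemma transfer_zero_zero (x y z : R) (ψ : (Fin 0 → ℤ) → R) : transfer 0 x y z 0 ψ = 0 := by
  funext c
  simp [transfer_apply, rowWeight]

lemma transfer_zero_one (x y z : R) (ψ : (Fin 0 → ℤ) → R) : transfer 0 x y z 1 ψ = ψ := by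
  funext c
  simp [transfer_apply, rowWeight, Subsingleton.elim _ c]

/-- The restriction of a function of the column sums to a fixed sum `a` in the first column,
used for induction on the number of columns. -/
def slice {α : Type*} {n : ℕ} (a : ℤ) (ψ : (Fin (n + 1) → ℤ) → α) : (Fin n → ℤ) → α :=
  fun c => ψ (Fin.cons a c)

lemma slice_ext {α : Type*} {n : ℕ} {ψ φ : (Fin (n + 1) → ℤ) → α}
    (h₀ : slice 0 ψ = slice 0 φ) (h₁ : slice 1 ψ = slice 1 φ)
    (h : ∀ a, a ≠ 0 → a ≠ 1 → slice a ψ = slice a φ) : ψ = φ := by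
  have hall : ∀ a, slice a ψ = slice a φ := fun a => by
    rcases eq_or_ne a 0 with rfl | ha₀
    · exact h₀
    rcases eq_or_ne a 1 with rfl | ha₁
    · exact h₁
    exact h a ha₀ ha₁
  funext c
  simpa [slice] using congrFun (hall (c 0)) (Fin.tail c)

lemma slice_sub {n : ℕ} (a : ℤ) (ψ φ : (Fin (n + 1) → ℤ) → R) :
    slice a (ψ - φ) = slice a ψ - slice a φ := rfl

lemma slice_smul {n : ℕ} (a : ℤ) (b : R) (ψ : (Fin (n + 1) → ℤ) → R) :
    slice a (b • ψ) = b • slice a ψ := rfl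

lemma slice_transfer {n : ℕ} (x y z : R) (h a : ℤ) (ψ : (Fin (n + 1) → ℤ) → R) :
    slice a (transfer (n + 1) x y z h ψ) = ∑ r : Fin 3,
      vertexWeight x y z (h + entry r) (a - entry r) (entry r) •
        transfer n x y z (h + entry r) (slice (a - entry r) ψ) := by
  funext c
  simp only [slice, transfer_apply, Finset.sum_apply, Pi.smul_apply, smul_eq_mul]
  rw [← (Fin.consEquiv fun _ => Fin 3).sum_comp, Fintype.sum_prod_type]
  refine Finset.sum_congr rfl fun r₀ _ => ?_
  rw [Finset.mul_sum]
  refine Finset.sum_congr rfl fun r _ => ?_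
  have hrow : entry ∘ (Fin.consEquiv fun _ => Fin 3) (r₀, r) =
      (Fin.cons (entry r₀) (entry ∘ r) : Fin (n + 1) → ℤ) := by
    funext j
    refine Fin.cases ?_ (fun j => ?_) j <;> simp [Fin.consEquiv]
  have hcol : (Fin.cons a c : Fin (n + 1) → ℤ) - (Fin.cons (entry r₀) (entry ∘ r)) =
      (Fin.cons (a - entry r₀) (c - entry ∘ r) : Fin (n + 1) → ℤ) := by
    funext j
    refine Fin.cases ?_ (fun j => ?_) j <;> simp
  rw [hrow, hcol, rowWeight_cons, mul_assoc]

section SliceTransfer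

variable {n : ℕ} (x y z : R) (ψ : (Fin (n + 1) → ℤ) → R)

lemma slice_zero_transfer_zero :
    slice 0 (transfer (n + 1) x y z 0 ψ) = z • transfer n x y z 0 (slice 0 ψ) := by
  rw [slice_transfer, Fin.sum_univ_three]
  simp [vertexWeight, entry]

lemma slice_one_transfer_zero :
    slice 1 (transfer (n + 1) x y z 0 ψ) =
      transfer n x y z 0 (slice 1 ψ) + transfer n x y z 1 (slice 0 ψ) := by
  rw [slice_transfer, Fin.sum_univ_three]
  simp [vertexWeight, entry]

lemma slice_zero_transfer_one :
    slice 0 (transfer (n + 1) x y z 1 ψ) = transfer n x y z 1 (slice 0 ψ) +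
      minusWeight x y z • transfer n x y z 0 (slice 1 ψ) := by
  rw [slice_transfer, Fin.sum_univ_three]
  simp [vertexWeight, entry, add_comm]

lemma slice_one_transfer_one :
    slice 1 (transfer (n + 1) x y z 1 ψ) = (x * z) • transfer n x y z 1 (slice 1 ψ) := by
  rw [slice_transfer, Fin.sum_univ_three]
  simp [vertexWeight, entry]

lemma slice_transfer_of_ne {a : ℤ} (h : ℤ) (h₀ : a ≠ 0) (h₁ : a ≠ 1) :
    slice a (transfer (n + 1) x y z h ψ) = 0 := by
  rw [slice_transfer]
  refine Finset.sum_eq_zero fun r _ => ?_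
  rw [vertexWeight, if_neg, zero_smul]
  simp [h₀, h₁]

end SliceTransfer

/-! ### Exchange relations -/

/-- The exchange relations of the algebraic Bethe ansatz between the row transfer operators with
spectral parameters `u` and `v`, with the denominator `v - u` cleared. -/
structure ExchangeRelations (n : ℕ) (x y u v : R) : Prop where
  zero_zero : ∀ ψ, transfer n x y u 0 (transfer n x y v 0 ψ) =
    transfer n x y v 0 (transfer n x y u 0 ψ)
  one_one : ∀ ψ, transfer n x y u 1 (transfer n x y v 1 ψ) =
    transfer n x y v 1 (transfer n x y u 1 ψ)
  one_zero : ∀ ψ, (v - u) • transfer n x y u 1 (transfer n x y v 0 ψ) =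
    (1 + (y - x - 1) * u + x * u * v) • transfer n x y v 0 (transfer n x y u 1 ψ) -
      minusWeight x y u • transfer n x y u 0 (transfer n x y v 1 ψ)

namespace ExchangeRelations

lemma refl (n : ℕ) (x y u : R) : ExchangeRelations n x y u u where
  zero_zero _ := rfl
  one_one _ := rfl
  one_zero ψ := by
    unfold minusWeight
    module

lemma zero (x y u v : R) : ExchangeRelations 0 x y u v where
  zero_zero _ := by simp only [transfer_zero_zero]
  one_one _ := by simp only [transfer_zero_one]
  one_zero _ := by simp only [transfer_zero_zero, transfer_zero_one, smul_zero, sub_zero]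

section Succ

variable [IsDomain R] {n : ℕ} {x y u v : R}

lemma transfer_succ_zero_zero (huv : u ≠ v) (h : ExchangeRelations n x y u v)
    (h' : ExchangeRelations n x y v u) (ψ : (Fin (n + 1) → ℤ) → R) :
    transfer (n + 1) x y u 0 (transfer (n + 1) x y v 0 ψ) =
      transfer (n + 1) x y v 0 (transfer (n + 1) x y u 0 ψ) := by
  refine slice_ext ?_ ?_ fun a h₀ h₁ => by
    simp only [slice_transfer_of_ne _ _ _ _ _ h₀ h₁]
  · simp only [slice_zero_transfer_zero, map_smul, smul_smul, h.zero_zero, mul_comm]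
  · simp only [slice_zero_transfer_zero, slice_one_transfer_zero, map_add, map_smul]
    apply smul_right_injective _ (sub_ne_zero.2 huv.symm)
    linear_combination (norm := (unfold minusWeight; module)) (v - u) • h.zero_zero (slice 1 ψ) +
      v • h.one_zero (slice 0 ψ) + u • h'.one_zero (slice 0 ψ)

lemma transfer_succ_one_one (huv : u ≠ v) (h : ExchangeRelations n x y u v)
    (h' : ExchangeRelations n x y v u) (ψ : (Fin (n + 1) → ℤ) → R) :
    transfer (n + 1) x y u 1 (transfer (n + 1) x y v 1 ψ) =
      transfer (n + 1) x y v 1 (transfer (n + 1) x y u 1 ψ) := by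
  refine slice_ext ?_ ?_ fun a h₀ h₁ => by
    simp only [slice_transfer_of_ne _ _ _ _ _ h₀ h₁]
  · simp only [slice_zero_transfer_one, slice_one_transfer_one, map_add, map_smul]
    apply smul_right_injective _ (sub_ne_zero.2 huv.symm)
    linear_combination (norm := (unfold minusWeight; module)) (v - u) • h.one_one (slice 0 ψ) +
      minusWeight x y v • h.one_zero (slice 1 ψ) + minusWeight x y u • h'.one_zero (slice 1 ψ)
  · simp only [slice_one_transfer_one, map_smul, smul_smul, h.one_one, mul_comm]

lemma transfer_succ_one_zero (huv : u ≠ v) (h : ExchangeRelations n x y u v)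
    (h' : ExchangeRelations n x y v u) (ψ : (Fin (n + 1) → ℤ) → R) :
    (v - u) • transfer (n + 1) x y u 1 (transfer (n + 1) x y v 0 ψ) =
      (1 + (y - x - 1) * u + x * u * v) •
        transfer (n + 1) x y v 0 (transfer (n + 1) x y u 1 ψ) -
      minusWeight x y u • transfer (n + 1) x y u 0 (transfer (n + 1) x y v 1 ψ) := by
  refine slice_ext ?_ ?_ fun a h₀ h₁ => by
    simp only [slice_sub, slice_smul, slice_transfer_of_ne _ _ _ _ _ h₀ h₁, smul_zero, sub_zero]
  all_goals
    simp only [slice_sub, slice_smul, slice_zero_transfer_zero, slice_one_transfer_zero,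
      slice_zero_transfer_one, slice_one_transfer_one, map_add, map_smul, smul_add, smul_smul]
    apply smul_right_injective _ (sub_ne_zero.2 huv.symm)
  · linear_combination (norm := (unfold minusWeight; module))
      ((v - u) * v) • h.one_zero (slice 0 ψ) +
      ((v - u) * (1 + (y - x - 1) * u + x * u * v) * v * minusWeight x y u) •
        h.zero_zero (slice 1 ψ)
  · linear_combination (norm := (unfold minusWeight; module))
      ((v - u) * x * u + minusWeight x y u * minusWeight x y v) • h.one_zero (slice 1 ψ) +
      ((1 + (y - x - 1) * u + x * u * v) * minusWeight x y u) • h'.one_zero (slice 1 ψ) +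
      ((v - u) * (1 + (y - x - 1) * u + x * u * v)) • h.one_one (slice 0 ψ)

end Succ

end ExchangeRelations

theorem exchangeRelations [IsDomain R] (n : ℕ) (x y u v : R) : ExchangeRelations n x y u v := by
  rcases eq_or_ne u v with rfl | huv
  · exact .refl n x y u
  induction n generalizing u v with
  | zero => exact .zero x y u v
  | succ n ih =>
    have h := ih u v huv
    have h' := ih v u huv.symm
    exact ⟨h.transfer_succ_zero_zero huv h', h.transfer_succ_one_one huv h',
      h.transfer_succ_one_zero huv h'⟩

/-! ### Bethe vectors -/

/-- The function of the column sums supported at zero, where all column sums start above the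
first row. -/
def vacuum (R : Type*) [CommRing R] (n : ℕ) : (Fin n → ℤ) → R := fun c => if c = 0 then 1 else 0

lemma slice_zero_vacuum (n : ℕ) : slice 0 (vacuum R (n + 1)) = vacuum R n := by
  funext c
  have hc : (Fin.cons 0 c : Fin (n + 1) → ℤ) = 0 ↔ c = 0 := by
    simp [funext_iff, Fin.forall_fin_succ]
  simp [slice, vacuum, hc]

lemma slice_vacuum_of_ne (n : ℕ) {a : ℤ} (ha : a ≠ 0) : slice a (vacuum R (n + 1)) = 0 := by
  funext c
  have hc : (Fin.cons a c : Fin (n + 1) → ℤ) ≠ 0 := fun h => ha (by simpa using congrFun h 0)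
  simp [slice, vacuum, hc]

lemma transfer_one_vacuum (x y z : R) (n : ℕ) :
    transfer n x y z 1 (vacuum R n) = vacuum R n := by
  induction n with
  | zero => exact transfer_zero_one ..
  | succ n ih =>
    refine slice_ext ?_ ?_ fun a h₀ h₁ => ?_
    · simp [slice_zero_transfer_one, slice_zero_vacuum, slice_vacuum_of_ne, ih]
    · simp [slice_one_transfer_one, slice_vacuum_of_ne]
    · simp [slice_transfer_of_ne, slice_vacuum_of_ne, h₀, h₁]

section BetheVector

variable [IsDomain R] (x y : R)

instance leftCommutative_transfer_zero (n : ℕ) :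
    LeftCommutative fun (u : R) (ψ : (Fin n → ℤ) → R) => transfer n x y u 0 ψ :=
  ⟨fun u v => (exchangeRelations n x y u v).zero_zero⟩

/-- The Bethe vector: the operators `B(u)` for `u ∈ s`, in any order, applied to the vacuum. -/
def betheVector (n : ℕ) (s : Multiset R) : (Fin n → ℤ) → R :=
  s.foldr (fun u ψ => transfer n x y u 0 ψ) (vacuum R n)

lemma betheVector_zero (n : ℕ) : betheVector x y n 0 = vacuum R n := rfl

lemma betheVector_cons (n : ℕ) (u : R) (s : Multiset R) :
    betheVector x y n (u ::ₘ s) = transfer n x y u 0 (betheVector x y n s) :=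
  Multiset.foldr_cons ..

lemma slice_zero_betheVector (n : ℕ) (s : Multiset R) :
    slice 0 (betheVector x y (n + 1) s) = s.prod • betheVector x y n s := by
  induction s using Multiset.induction_on with
  | empty => simp [betheVector_zero, slice_zero_vacuum]
  | cons a s ih =>
    rw [betheVector_cons, slice_zero_transfer_zero, ih, betheVector_cons, map_smul, smul_smul,
      Multiset.prod_cons]

end BetheVector

section Exchange

variable {K : Type*} [Field K]

/-- The coefficient of `B(v) D(u)` in `D(u) B(v)`. Here and in `exchangeOff`, `u ≠ v` is
intended. -/
def exchangeDiag (x y u v : K) : K := (1 + (y - x - 1) * u + x * u * v) / (v - u)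

/-- The coefficient of `B(u) D(v)` in `D(u) B(v)`. -/
def exchangeOff (x y u v : K) : K := -minusWeight x y u / (v - u)

variable {x y : K}

lemma transfer_one_transfer_zero {n : ℕ} {u v : K} (huv : u ≠ v) (ψ : (Fin n → ℤ) → K) :
    transfer n x y u 1 (transfer n x y v 0 ψ) =
      exchangeDiag x y u v • transfer n x y v 0 (transfer n x y u 1 ψ) +
      exchangeOff x y u v • transfer n x y u 0 (transfer n x y v 1 ψ) := by
  have hne : v - u ≠ 0 := sub_ne_zero.2 huv.symm
  apply smul_right_injective _ hne
  simp only [(exchangeRelations n x y u v).one_zero ψ, smul_add, smul_smul, exchangeDiag,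
    exchangeOff, mul_div_cancel₀ _ hne]
  module

lemma exchangeDiag_mul_exchangeOff {u v w : K} (huv : u ≠ v) (huw : u ≠ w) (hvw : v ≠ w) :
    exchangeOff x y u w * exchangeDiag x y w v =
      exchangeDiag x y u v * exchangeOff x y u w + exchangeOff x y u v * exchangeOff x y v w := by
  have h1 : v - u ≠ 0 := sub_ne_zero.2 huv.symm
  have h2 : w - u ≠ 0 := sub_ne_zero.2 huw.symm
  have h3 : w - v ≠ 0 := sub_ne_zero.2 hvw.symm
  have h4 : v - w ≠ 0 := sub_ne_zero.2 hvw
  unfold exchangeDiag exchangeOff minusWeight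
  field_simp
  ring

lemma one_add_mul_exchangeOff {u v : K} (huv : u ≠ v) :
    1 + v * exchangeOff x y u v = u * exchangeDiag x y v u := by
  have h1 : v - u ≠ 0 := sub_ne_zero.2 huv.symm
  have h2 : u - v ≠ 0 := sub_ne_zero.2 huv
  unfold exchangeDiag exchangeOff minusWeight
  field_simp
  ring

lemma mul_exchangeDiag {u v : K} (hu : u ≠ 0) (hv : v ≠ 0) (huv : u ≠ v) :
    v * exchangeDiag x y u v * (u⁻¹ - v⁻¹) = u⁻¹ - (x + 1 - y - x * v) := by
  have h1 : v - u ≠ 0 := sub_ne_zero.2 huv.symm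
  unfold exchangeDiag
  field_simp
  ring

/-- Both ways of producing `B(v) B(u)` while `D(u)` is moved past `B(v)` and `B(w)`, turning the
latter into `D(w)`, combine into a single term. -/
lemma exchange_smul_transfer_zero {n : ℕ} {u v w : K} (huv : u ≠ v) (huw : u ≠ w) (hvw : v ≠ w)
    (p : K) (ψ : (Fin n → ℤ) → K) :
    (exchangeOff x y u w * (exchangeDiag x y w v * p)) •
        transfer n x y u 0 (transfer n x y v 0 ψ) =
      exchangeDiag x y u v • transfer n x y v 0 ((exchangeOff x y u w * p) •
        transfer n x y u 0 ψ) +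
      exchangeOff x y u v • transfer n x y u 0 ((exchangeOff x y v w * p) •
        transfer n x y v 0 ψ) := by
  rw [← mul_assoc, exchangeDiag_mul_exchangeOff huv huw hvw, map_smul, map_smul,
    (exchangeRelations n x y v u).zero_zero]
  module

variable [DecidableEq K]

/-- The operator `D(u)` moves through all operators of a Bethe vector; the terms in which it is
exchanged for the operator at `k` are determined by those in which this happens first. -/
theorem transfer_one_betheVector (n : ℕ) (s : Finset K) {u : K} (hu : u ∉ s) :
    transfer n x y u 1 (betheVector x y n s.val) =
      (∏ v ∈ s, exchangeDiag x y u v) • betheVector x y n s.val +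
      ∑ k ∈ s, (exchangeOff x y u k * ∏ v ∈ s.erase k, exchangeDiag x y k v) •
        transfer n x y u 0 (betheVector x y n (s.erase k).val) := by
  induction s using Finset.induction_on generalizing u with
  | empty => simp [betheVector_zero, transfer_one_vacuum]
  | insert a s ha ih =>
    obtain ⟨hua, hus⟩ : u ≠ a ∧ u ∉ s := by simpa using hu
    have hterm : ∀ k ∈ s, (exchangeOff x y u k *
          ∏ v ∈ (insert a s).erase k, exchangeDiag x y k v) •
        transfer n x y u 0 (betheVector x y n ((insert a s).erase k).val) =
        exchangeDiag x y u a • transfer n x y a 0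
          ((exchangeOff x y u k * ∏ v ∈ s.erase k, exchangeDiag x y k v) •
            transfer n x y u 0 (betheVector x y n (s.erase k).val)) +
        exchangeOff x y u a • transfer n x y u 0
          ((exchangeOff x y a k * ∏ v ∈ s.erase k, exchangeDiag x y k v) •
            transfer n x y a 0 (betheVector x y n (s.erase k).val)) := by
      intro k hk
      have hak : a ≠ k := fun h => ha (h ▸ hk)
      have huk : u ≠ k := fun h => hus (h ▸ hk)
      have hae : a ∉ s.erase k := fun h => ha (Finset.mem_of_mem_erase h)
      rw [Finset.erase_insert_of_ne hak, Finset.prod_insert hae,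
        Finset.insert_val_of_notMem hae, betheVector_cons, exchange_smul_transfer_zero hua huk hak]
    rw [Finset.insert_val_of_notMem ha, betheVector_cons, transfer_one_transfer_zero hua, ih hus,
      ih ha, Finset.prod_insert ha, Finset.sum_insert ha, Finset.erase_insert ha,
      Finset.sum_congr rfl hterm, Finset.sum_add_distrib, ← Finset.smul_sum, ← Finset.smul_sum,
      ← map_sum, ← map_sum, map_add, map_add, map_smul, map_smul]
    module

theorem slice_one_betheVector (n : ℕ) (s : Finset K) :
    slice 1 (betheVector x y (n + 1) s.val) =
      ∑ k ∈ s, (∏ v ∈ s.erase k, v * exchangeDiag x y k v) •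
        betheVector x y n (s.erase k).val := by
  induction s using Finset.induction_on with
  | empty => simp [betheVector_zero, slice_vacuum_of_ne]
  | insert a s ha ih =>
    have hprod : s.val.prod = ∏ v ∈ s, v := by rw [Finset.prod, Multiset.map_id']
    rw [Finset.insert_val_of_notMem ha, betheVector_cons, slice_one_transfer_zero, ih,
      slice_zero_betheVector, map_smul, transfer_one_betheVector n s ha, Finset.sum_insert ha,
      Finset.erase_insert ha, map_sum, smul_add, Finset.smul_sum, smul_smul,
      Finset.prod_mul_distrib, hprod, add_left_comm, ← Finset.sum_add_distrib]
    congr 1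
    refine Finset.sum_congr rfl fun k hk => ?_
    have hak : a ≠ k := fun h => ha (h ▸ hk)
    have hae : a ∉ s.erase k := fun h => ha (Finset.mem_of_mem_erase h)
    rw [Finset.erase_insert_of_ne hak, Finset.prod_insert hae, Finset.insert_val_of_notMem hae,
      betheVector_cons, ← one_add_mul_exchangeOff hak, map_smul, smul_smul, ← add_smul,
      Finset.prod_mul_distrib, ← Finset.mul_prod_erase s (fun v => v) hk]
    congr 1
    ring

end Exchange

/-! ### The partition function -/

/-- The weighted sum over the fillings of `N` rows of length `n` with spectral parameters `z`
whose column sums are `c`. -/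
def rowsSum (n : ℕ) {N : ℕ} (x y : R) (z : Fin N → R) (c : Fin n → ℤ) : R :=
  ∑ e : Fin N → Fin n → Fin 3,
    (∏ i, rowWeight x y (z i) 0 (columnSumAbove (fun i => entry ∘ e i) i) (entry ∘ e i)) *
      if ∑ i, entry ∘ e i = c then 1 else 0

lemma rowsSum_zero (n : ℕ) (x y : R) (z : Fin 0 → R) : rowsSum n x y z = vacuum R n := by
  funext c
  simp [rowsSum, vacuum, funext_iff, eq_comm]

lemma columnSumAbove_snoc_castSucc {n N : ℕ} (A : Fin N → Fin n → ℤ) (r : Fin n → ℤ) (i : Fin N) :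
    columnSumAbove (Fin.snoc A r : Fin (N + 1) → Fin n → ℤ) i.castSucc = columnSumAbove A i := by
  funext j
  simp [columnSumAbove, Finset.sum_filter, Fin.sum_univ_castSucc,
    (Fin.castSucc_lt_last i).not_gt]

lemma columnSumAbove_snoc_last {n N : ℕ} (A : Fin N → Fin n → ℤ) (r : Fin n → ℤ) :
    columnSumAbove (Fin.snoc A r : Fin (N + 1) → Fin n → ℤ) (Fin.last N) = ∑ i, A i := by
  funext j
  simp [columnSumAbove, Finset.sum_filter, Fin.sum_univ_castSucc]

lemma rowsSum_succ (n : ℕ) {N : ℕ} (x y : R) (z : Fin (N + 1) → R) :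
    rowsSum n x y z = transfer n x y (z (Fin.last N)) 0 (rowsSum n x y (Fin.init z)) := by
  funext c
  rw [transfer_apply, rowsSum, ← (Fin.snocEquiv fun _ => Fin n → Fin 3).sum_comp,
    Fintype.sum_prod_type]
  refine Finset.sum_congr rfl fun r _ => ?_
  rw [rowsSum, Finset.mul_sum]
  refine Finset.sum_congr rfl fun e _ => ?_
  have hsnoc : (fun i => entry ∘ (Fin.snoc e r : Fin (N + 1) → Fin n → Fin 3) i) =
      Fin.snoc (fun i => entry ∘ e i) (entry ∘ r) := Fin.comp_snoc (fun f => entry ∘ f) e r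
  simp only [Fin.snocEquiv, Equiv.coe_fn_mk, hsnoc, Fin.prod_univ_castSucc,
    columnSumAbove_snoc_castSucc, columnSumAbove_snoc_last, Fin.sum_univ_castSucc,
    Fin.snoc_castSucc, Fin.snoc_last, Fin.init, ← eq_sub_iff_add_eq]
  split_ifs with h
  · rw [h]
    ring
  · ring

/-- The domain-wall partition function with row spectral parameters `z`. -/
def partitionFunction {n : ℕ} (x y : R) (z : Fin n → R) : R := rowsSum n x y z fun _ => 1

lemma partitionFunction_zero (x y : R) (z : Fin 0 → R) : partitionFunction x y z = 1 := by
  rw [partitionFunction, rowsSum_zero, vacuum, if_pos (Subsingleton.elim _ _)]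

section IsDomain

variable [IsDomain R] (x y : R)

lemma rowsSum_eq_betheVector (n : ℕ) {N : ℕ} (z : Fin N → R) :
    rowsSum n x y z = betheVector x y n (Finset.univ.val.map z) := by
  induction N with
  | zero => simp [rowsSum_zero, betheVector_zero]
  | succ N ih =>
    have hz : Finset.univ.val.map z = z (Fin.last N) ::ₘ Finset.univ.val.map (Fin.init z) := by
      rw [Fin.univ_castSuccEmb, Finset.cons_val, Multiset.map_cons, Finset.map_val,
        Multiset.map_map]
      rfl
    rw [rowsSum_succ, ih, hz, betheVector_cons]

lemma partitionFunction_eq_betheVector {n : ℕ} (z : Fin n → R) :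
    partitionFunction x y z = betheVector x y n (Finset.univ.val.map z) fun _ => 1 := by
  rw [partitionFunction, rowsSum_eq_betheVector]

lemma partitionFunction_comp_perm_of_isDomain {n : ℕ} (z : Fin n → R) (σ : Equiv.Perm (Fin n)) :
    partitionFunction x y (z ∘ σ) = partitionFunction x y z := by
  have hσ : Finset.univ.val.map (z ∘ σ) = Finset.univ.val.map z := by
    rw [← Multiset.map_map, Multiset.map_univ_val_equiv]
  rw [partitionFunction_eq_betheVector, partitionFunction_eq_betheVector, hσ]

end IsDomain

lemma univ_map_erase_succAbove {α : Type*} [DecidableEq α] {n : ℕ} (f : Fin (n + 1) ↪ α)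
    (k : Fin (n + 1)) :
    (Finset.univ.map f).erase (f k) = Finset.univ.map (k.succAboveEmb.trans f) := by
  rw [← Finset.map_erase, ← Finset.map_map]
  congr 1
  ext i
  simp only [Finset.mem_erase, Finset.mem_univ, and_true, Finset.mem_map, true_and,
    Fin.coe_succAboveEmb, Fin.exists_succAbove_eq_iff]

theorem partitionFunction_succ {K : Type*} [Field K] (x y : K) {n : ℕ} (z : Fin (n + 1) → K)
    (hz : Function.Injective z) :
    partitionFunction x y z = ∑ k, (∏ i, z (k.succAbove i) *
      exchangeDiag x y (z k) (z (k.succAbove i))) *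
        partitionFunction x y (z ∘ k.succAbove) := by
  classical
  have hcons : (Fin.cons 1 fun _ => 1 : Fin (n + 1) → ℤ) = fun _ => 1 := by
    funext j
    refine Fin.cases ?_ (fun j => ?_) j <;> simp
  have hslice := congrFun
    (slice_one_betheVector (x := x) (y := y) n (Finset.univ.map ⟨z, hz⟩)) fun _ => 1
  rw [slice, hcons, Finset.sum_map, Finset.sum_apply, Finset.map_val] at hslice
  refine (partitionFunction_eq_betheVector x y z).trans (hslice.trans ?_)
  refine Finset.sum_congr rfl fun k _ => ?_
  rw [univ_map_erase_succAbove, Finset.prod_map, Finset.map_val, Pi.smul_apply, smul_eq_mul,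
    partitionFunction_eq_betheVector]
  rfl

/-! ### The determinant formula -/

/-- The complete homogeneous symmetric polynomial of degree `k` in two variables. Up to the
factor `∏ i, z i ^ (n - 1)`, the entries `complHom z⁻¹ (x + 1 - y - x * z) j` make up the
determinant of the domain-wall partition function. -/
def complHom (s t : R) : ℕ → R
  | 0 => 1
  | k + 1 => s ^ (k + 1) + t * complHom s t k

lemma complHom_zero_right (s : R) (k : ℕ) : complHom s 0 k = s ^ k := by
  cases k <;> simp [complHom]

lemma sum_complHom (s t : R) (q : ℕ → R) (n : ℕ) :
    ∑ j ∈ Finset.range (n + 1), (q j - t * q (j + 1)) * complHom s t j +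
      t * q (n + 1) * complHom s t n = ∑ j ∈ Finset.range (n + 1), q j * s ^ j := by
  induction n with
  | zero => simp [complHom]
  | succ n ih =>
    rw [Finset.sum_range_succ, Finset.sum_range_succ _ (n + 1), ← ih, complHom]
    ring

lemma det_eq_sum_of_last_column {n : ℕ} (M : Matrix (Fin (n + 1)) (Fin (n + 1)) R)
    (c : Fin (n + 1) → R) (hc : c (Fin.last n) = 1) :
    M.det = ∑ i : Fin (n + 1), (-1) ^ ((i : ℕ) + n) * (∑ j, c j * M i j) *
      (M.submatrix i.succAbove Fin.castSucc).det := by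
  have h := Matrix.det_updateCol_sum M (Fin.last n) c
  rw [hc, one_smul] at h
  rw [← h, Matrix.det_succ_column _ (Fin.last n)]
  refine Finset.sum_congr rfl fun i _ => ?_
  rw [Fin.val_last, Matrix.updateCol_self, Fin.succAbove_last]
  congr 2
  ext a b
  simp

section Polynomial

open Polynomial

lemma coeff_prod_X_sub_C_self {n : ℕ} (t : Fin n → R) :
    (∏ i, (X - C (t i))).coeff n = 1 := by
  nontriviality R
  simpa using (monic_prod_X_sub_C t Finset.univ).coeff_natDegree

lemma sum_coeff_prod_X_sub_C {n : ℕ} (t : Fin n → R) (a : R) :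
    ∑ j ∈ Finset.range (n + 1), (∏ i, (X - C (t i))).coeff j * a ^ j = ∏ i, (a - t i) := by
  nontriviality R
  rw [← eval_eq_sum_range' (by simp), eval_prod]
  simp

lemma det_complHom_succ {n : ℕ} (s t : Fin (n + 1) → R) :
    (Matrix.of fun i j : Fin (n + 1) => complHom (s i) (t i) j).det =
      ∑ k : Fin (n + 1), (-1) ^ ((k : ℕ) + n) * (∏ i, (s k - t (k.succAbove i))) *
        (Matrix.of fun i j : Fin n =>
          complHom (s (k.succAbove i)) (t (k.succAbove i)) j).det := by
  nontriviality R
  rw [det_eq_sum_of_last_column _ (fun j => (∏ l, (X - C (t l))).coeff (j + 1))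
    (coeff_prod_X_sub_C_self t)]
  refine Finset.sum_congr rfl fun k _ => ?_
  congr 2
  set Q : R[X] := ∏ i, (X - C (t (k.succAbove i))) with hQ
  have htop : Q.coeff (n + 1) = 0 :=
    coeff_eq_zero_of_natDegree_lt (by simp [hQ])
  rw [← sum_coeff_prod_X_sub_C (fun i => t (k.succAbove i)), ← hQ, ← sum_complHom (s k) (t k),
    htop, mul_zero, zero_mul, add_zero, Finset.sum_range]
  refine Finset.sum_congr rfl fun j _ => ?_
  rw [Fin.prod_univ_succAbove _ k, ← hQ, sub_mul, coeff_sub, coeff_X_mul, coeff_C_mul,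
    Matrix.of_apply]

lemma det_vandermonde_succAbove {n : ℕ} (s : Fin (n + 1) → R) (k : Fin (n + 1)) :
    (Matrix.vandermonde s).det = (-1) ^ ((k : ℕ) + n) * (∏ i, (s k - s (k.succAbove i))) *
      (Matrix.vandermonde (s ∘ k.succAbove)).det := by
  have hsum : ∀ i, ∑ j : Fin (n + 1), (∏ l, (X - C (s (k.succAbove l)))).coeff j *
      Matrix.vandermonde s i j = ∏ l, (s i - s (k.succAbove l)) := fun i =>
    (Finset.sum_range fun j => (∏ l, (X - C (s (k.succAbove l)))).coeff j * s i ^ j).symm.trans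
      (sum_coeff_prod_X_sub_C _ _)
  rw [det_eq_sum_of_last_column _ (fun j => (∏ l, (X - C (s (k.succAbove l)))).coeff j)
    (coeff_prod_X_sub_C_self _), Finset.sum_eq_single k]
  · rw [hsum]
    rfl
  · intro i _ hik
    obtain ⟨l, rfl⟩ := Fin.exists_succAbove_eq hik
    rw [hsum, Finset.prod_eq_zero (Finset.mem_univ l) (sub_self _), mul_zero, zero_mul]
  · simp

end Polynomial

lemma det_vandermonde_snoc {n : ℕ} (s : Fin n → R) (a : R) :
    (Matrix.vandermonde (Fin.snoc s a : Fin (n + 1) → R)).det =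
      (∏ l, (a - s l)) * (Matrix.vandermonde s).det := by
  have h : (Fin.snoc s a : Fin (n + 1) → R) ∘ Fin.castSucc = s := by
    funext i
    simp
  rw [det_vandermonde_succAbove _ (Fin.last n), Fin.succAbove_last, h, Fin.val_last,
    ← two_mul, pow_mul, neg_one_sq, one_pow, one_mul]
  simp

lemma det_vandermonde_append {N m : ℕ} (s : Fin N → R) (u : Fin m → R) :
    (Matrix.vandermonde (Fin.append s u)).det = (Matrix.vandermonde s).det *
      (∏ i, ∏ l, (u i - s l)) * (Matrix.vandermonde u).det := by
  induction m with
  | zero =>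
    rw [Subsingleton.elim u Fin.elim0]
    simp
  | succ m ih =>
    obtain ⟨v, a, rfl⟩ : ∃ v a, (Fin.snoc v a : Fin (m + 1) → R) = u :=
      ⟨_, _, Fin.snoc_init_self u⟩
    have h : ∏ l, (a - Fin.append s v l) = (∏ l, (a - s l)) * ∏ l, (a - v l) := by
      simp [Fin.prod_univ_add]
    rw [Fin.append_snoc]
    refine (det_vandermonde_snoc (Fin.append s v) a).trans ?_
    rw [h, ih, det_vandermonde_snoc v, Fin.prod_univ_castSucc]
    simp only [Fin.snoc_castSucc, Fin.snoc_last]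
    ring

theorem partitionFunction_mul_det_vandermonde {K : Type*} [Field K] (x y : K) {n : ℕ}
    (z : Fin n → Kˣ) :
    partitionFunction x y (fun i => (z i : K)) *
        (Matrix.vandermonde fun i => (z i : K)⁻¹).det =
      (Matrix.of fun i j : Fin n => complHom (z i : K)⁻¹ (x + 1 - y - x * z i) j).det := by
  by_cases hz : Function.Injective z
  · induction n with
    | zero => simp [partitionFunction_zero]
    | succ n ih =>
      rw [det_complHom_succ (fun i => (z i : K)⁻¹) (fun i => x + 1 - y - x * z i),
        partitionFunction_succ x y (fun i => (z i : K)) (Units.val_injective.comp hz),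
        Finset.sum_mul]
      refine Finset.sum_congr rfl fun k _ => ?_
      have hk := ih (z ∘ k.succAbove) (hz.comp Fin.succAbove_right_injective)
      simp only [Function.comp_apply] at hk
      rw [← hk, det_vandermonde_succAbove _ k]
      have h : ∏ i, ((z k : K)⁻¹ - (x + 1 - y - x * z (k.succAbove i))) =
          (∏ i, z (k.succAbove i) * exchangeDiag x y (z k : K) (z (k.succAbove i))) *
            ∏ i, ((z k : K)⁻¹ - (z (k.succAbove i) : K)⁻¹) := by
        rw [← Finset.prod_mul_distrib]
        refine Finset.prod_congr rfl fun i _ => ?_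
        exact (mul_exchangeDiag (Units.ne_zero _) (Units.ne_zero _) fun h =>
          Fin.succAbove_ne k i (hz (Units.ext h)).symm).symm
      rw [h]
      simp only [Function.comp_def]
      ring
  · obtain ⟨i, j, hij, hne⟩ := Function.not_injective_iff.1 hz
    rw [Matrix.det_vandermonde_eq_zero_iff.2 ⟨i, j, by rw [hij], hne⟩, mul_zero,
      Matrix.det_zero_of_row_eq hne]
    funext l
    simp only [Matrix.of_apply, hij]

lemma partitionFunction_zero_one {K : Type*} [Field K] {n : ℕ} (z : Fin n → Kˣ)
    (hz : Function.Injective z) : partitionFunction 0 1 (fun i => (z i : K)) = 1 := by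
  have h := partitionFunction_mul_det_vandermonde 0 1 z
  simp only [zero_add, sub_self, zero_mul, complHom_zero_right] at h
  exact mul_right_cancel₀ (Matrix.det_vandermonde_ne_zero_iff.2
    (inv_injective.comp (Units.val_injective.comp hz))) (h.trans (one_mul _).symm)

/-! ### Bordered determinants -/

section Bordered

variable {P : Type*}

/-- The matrix of values of the functions `V · 0, V · 1, …` at the points `p`. -/
def evalMatrix {n : ℕ} (V : P → ℕ → R) (p : Fin n → P) : Matrix (Fin n) (Fin n) R :=
  Matrix.of fun i j => V (p i) j

/-- The coefficients of `V p 0, V p 1, …` in the expansion of the determinant of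
`evalMatrix V (Fin.snoc t p)` along the last row. -/
def borderCoeff {k : ℕ} (V : P → ℕ → R) (t : Fin k → P) (l : ℕ) : R :=
  if h : l < k + 1 then
    (-1) ^ (k + l) * (Matrix.of fun i j : Fin k => V (t i) (Fin.succAbove ⟨l, h⟩ j)).det
  else 0

lemma borderCoeff_self {k : ℕ} (V : P → ℕ → R) (t : Fin k → P) :
    borderCoeff V t k = (evalMatrix V t).det := by
  have h : (⟨k, k.lt_succ_self⟩ : Fin (k + 1)) = Fin.last k := rfl
  rw [borderCoeff, dif_pos k.lt_succ_self, h, Fin.succAbove_last, ← two_mul, pow_mul, neg_one_sq,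
    one_pow, one_mul]
  rfl

lemma borderCoeff_of_lt {k l : ℕ} (V : P → ℕ → R) (t : Fin k → P) (h : k < l) :
    borderCoeff V t l = 0 :=
  dif_neg (by omega)

lemma sum_mul_borderCoeff {k n : ℕ} (V : P → ℕ → R) (t : Fin k → P) (p : P) (h : k < n) :
    ∑ l : Fin n, V p l * borderCoeff V t l =
      (evalMatrix V (Fin.snoc t p : Fin (k + 1) → P)).det := by
  rw [Fin.sum_univ_eq_sum_range fun l => V p l * borderCoeff V t l,
    ← Finset.sum_subset (Finset.range_subset_range.2 (Nat.succ_le_of_lt h)),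
    Finset.sum_range, Matrix.det_succ_row _ (Fin.last k)]
  · refine Finset.sum_congr rfl fun l _ => ?_
    have hsub : (evalMatrix V (Fin.snoc t p : Fin (k + 1) → P)).submatrix (Fin.last k).succAbove
        l.succAbove = Matrix.of fun i j : Fin k => V (t i) (l.succAbove j) := by
      ext i j
      simp [evalMatrix]
    rw [hsub, borderCoeff, dif_pos l.2]
    simp only [evalMatrix, Matrix.of_apply, Fin.snoc_last, Fin.val_last, Fin.eta]
    ring
  · intro l _ hl
    rw [borderCoeff_of_lt V t (by simpa using hl), mul_zero]

lemma det_evalMatrix_snoc_apply {k : ℕ} (V : P → ℕ → R) (t : Fin k → P) (i : Fin k) :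
    (evalMatrix V (Fin.snoc t (t i) : Fin (k + 1) → P)).det = 0 := by
  refine Matrix.det_zero_of_row_eq (Fin.castSucc_lt_last i).ne ?_
  funext j
  simp [evalMatrix]

lemma det_of_borderCoeff (V : P → ℕ → R) (t : ℕ → P) (N m : ℕ) :
    (Matrix.of fun l j : Fin m => borderCoeff V (fun i : Fin (N + j) => t i) (N + l)).det =
      ∏ j : Fin m, (evalMatrix V fun i : Fin (N + j) => t i).det := by
  rw [Matrix.det_of_isUpperTriangular]
  · simp only [Matrix.of_apply, borderCoeff_self]
  · intro i j hij
    exact borderCoeff_of_lt _ _ (Nat.add_lt_add_left hij N)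

/-- The matrix of `V` at all points is made block triangular by column operations, the first `N`
columns being kept and each of the others being replaced by a bordered determinant. -/
theorem det_evalMatrix_append (V : P → ℕ → R) (t : ℕ → P) {N m : ℕ} (z : Fin m → P) :
    (evalMatrix V (Fin.append (fun i : Fin N => t i) z)).det *
        ∏ j : Fin m, (evalMatrix V fun i : Fin (N + j) => t i).det =
      (evalMatrix V fun i : Fin N => t i).det * (Matrix.of fun i j : Fin m =>
        (evalMatrix V (Fin.snoc (fun i : Fin (N + j) => t i) (z i) : Fin (N + j + 1) → P)).det).det
        := by
  set A := (evalMatrix V (Fin.append (fun i : Fin N => t i) z)).submatrix finSumFinEquiv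
    finSumFinEquiv with hA
  set E : Matrix (Fin N) (Fin m) R := Matrix.of fun l j =>
    borderCoeff V (fun i : Fin (N + j) => t i) l
  set F : Matrix (Fin m) (Fin m) R := Matrix.of fun l j =>
    borderCoeff V (fun i : Fin (N + j) => t i) (N + l)
  set D : Matrix (Fin m) (Fin m) R := Matrix.of fun i j =>
    (evalMatrix V (Fin.snoc (fun i : Fin (N + j) => t i) (z i) : Fin (N + j + 1) → P)).det
    with hD
  have hdetA : A.det = (evalMatrix V (Fin.append (fun i : Fin N => t i) z)).det :=
    Matrix.det_submatrix_equiv_self _ _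
  have hborder : ∀ (p : P) (j : Fin m), ∑ l : Fin N, V p l * E l j +
      ∑ l : Fin m, V p (N + l) * F l j =
        (evalMatrix V (Fin.snoc (fun i : Fin (N + j) => t i) p : Fin (N + j + 1) → P)).det := by
    intro p j
    rw [← sum_mul_borderCoeff V _ p (Nat.add_lt_add_left j.2 N), Fin.sum_univ_add]
    rfl
  have hmul : A * Matrix.fromBlocks 1 E 0 F =
      Matrix.fromBlocks (evalMatrix V fun i : Fin N => t i) 0 (Matrix.of fun i l => V (z i) l)
        D := by
    ext (i | i) (j | j)
    · simp [hA, evalMatrix, Matrix.mul_apply, Matrix.one_apply]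
    · have h := det_evalMatrix_snoc_apply V (fun i : Fin (N + j) => t i) (Fin.castAdd j i)
      simpa [hA, evalMatrix, Matrix.mul_apply] using (hborder (t i) j).trans h
    · simp [hA, evalMatrix, Matrix.mul_apply, Matrix.one_apply]
    · simpa [hA, hD, evalMatrix, Matrix.mul_apply] using hborder (z i) j
  have hdet := congrArg Matrix.det hmul
  rwa [Matrix.det_mul, Matrix.det_fromBlocks_zero₂₁, Matrix.det_fromBlocks_zero₁₂, Matrix.det_one,
    one_mul, hdetA, det_of_borderCoeff] at hdet

end Bordered

section Quotient

variable {P : Type*} {V : P → ℕ → R} {s : P → R} {F : ∀ {n : ℕ}, (Fin n → P) → R}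

lemma comp_append {α β : Type*} (f : α → β) {N m : ℕ} (s : Fin N → α) (u : Fin m → α) :
    f ∘ Fin.append s u = Fin.append (f ∘ s) (f ∘ u) := by
  funext i
  refine Fin.addCases (fun i => ?_) (fun i => ?_) i <;> simp

lemma det_of_det_evalMatrix_snoc
    (hF : ∀ {n : ℕ} (p : Fin n → P),
      F p * (Matrix.vandermonde (s ∘ p)).det = (evalMatrix V p).det)
    (t : ℕ → P) {N m : ℕ} (z : Fin m → P) :
    (Matrix.of fun i j : Fin m =>
      (evalMatrix V (Fin.snoc (fun i : Fin (N + j) => t i) (z i) : Fin (N + j + 1) → P)).det).det =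
      (∏ i, ∏ l : Fin N, (s (z i) - s (t l))) *
        ((∏ j : Fin m, (Matrix.vandermonde (s ∘ fun i : Fin (N + j) => t i)).det) *
          (Matrix.of fun i j : Fin m => (∏ l : Fin j, (s (z i) - s (t (N + l)))) *
            F (Fin.snoc (fun i : Fin (N + j) => t i) (z i) : Fin (N + j + 1) → P)).det) := by
  rw [← Matrix.det_mul_row, ← Matrix.det_mul_column]
  congr 1
  ext i j
  simp only [Matrix.of_apply]
  rw [← hF, Fin.comp_snoc, det_vandermonde_snoc, Fin.prod_univ_add]
  simp only [Function.comp_apply, Fin.val_castAdd, Fin.val_natAdd]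
  ring

/-- Dividing the identity for the determinants of `V` by Vandermonde determinants leaves only the
factors `s (z i) - s (t l)` with `N ≤ l < N + j`. -/
theorem append_mul_of_mul_det_vandermonde [IsDomain R]
    (hF : ∀ {n : ℕ} (p : Fin n → P),
      F p * (Matrix.vandermonde (s ∘ p)).det = (evalMatrix V p).det)
    (t : ℕ → P) {N m : ℕ} (z : Fin m → P) (hs : Function.Injective (s ∘ t))
    (hz : ∀ i l, s (z i) ≠ s (t l)) :
    F (Fin.append (fun i : Fin N => t i) z) * (Matrix.vandermonde (s ∘ z)).det *
        ∏ j : Fin m, F (fun i : Fin (N + j) => t i) =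
      F (fun i : Fin N => t i) * (Matrix.of fun i j : Fin m =>
        (∏ l : Fin j, (s (z i) - s (t (N + l)))) *
          F (Fin.snoc (fun i : Fin (N + j) => t i) (z i) : Fin (N + j + 1) → P)).det := by
  have hΔ : ∀ k, (Matrix.vandermonde (s ∘ fun i : Fin k => t i)).det ≠ 0 := fun k =>
    Matrix.det_vandermonde_ne_zero_iff.2 (hs.comp Fin.val_injective)
  have hprod : ∏ i, ∏ l : Fin N, (s (z i) - s (t l)) ≠ 0 :=
    Finset.prod_ne_zero_iff.2 fun i _ => Finset.prod_ne_zero_iff.2 fun (l : Fin N) _ =>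
      sub_ne_zero.2 (hz i l)
  have hprod' : ∏ j : Fin m, (Matrix.vandermonde (s ∘ fun i : Fin (N + j) => t i)).det ≠ 0 :=
    Finset.prod_ne_zero_iff.2 fun j _ => hΔ (N + j)
  have key := det_evalMatrix_append V t (N := N) z
  rw [det_of_det_evalMatrix_snoc hF, ← hF, ← hF, comp_append, det_vandermonde_append] at key
  simp only [← hF, Finset.prod_mul_distrib, Function.comp_apply] at key
  refine mul_left_cancel₀ (mul_ne_zero (hΔ N) (mul_ne_zero hprod hprod')) ?_
  linear_combination key

end Quotient

/-! ### Bordered partition functions -/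

lemma prod_pow_mul_det_vandermonde_inv {K : Type*} [Field K] {m : ℕ} (z : Fin m → K)
    (hz : ∀ i, z i ≠ 0) :
    (∏ i, z i ^ (m - 1)) * (Matrix.vandermonde fun i => (z i)⁻¹).det =
      ∏ i, ∏ j ∈ Finset.Ioi i, (z i - z j) := by
  have h := Matrix.det_projVandermonde (fun _ => 1) z
  simp only [one_mul] at h
  rw [← h, ← Matrix.det_mul_column]
  congr 1
  ext i j
  have hj : m - 1 = Fin.rev j + j := by
    rw [Fin.val_rev]
    omega
  rw [Matrix.of_apply, Matrix.vandermonde_apply, Matrix.projVandermonde_apply, one_pow, one_mul,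
    hj, pow_add, inv_pow, mul_assoc, mul_inv_cancel₀ (pow_ne_zero _ (hz i)), mul_one]

/-- The matrix of the partition functions at `t 0, …, t (N + j - 1), z i`, weighted as in the
evaluation of the partition function at `t 0, …, t (N - 1), z 0, …, z (m - 1)`. -/
def borderedMatrix {m : ℕ} (N : ℕ) (x y : R) (t : ℕ → R) (z : Fin m → R) :
    Matrix (Fin m) (Fin m) R :=
  Matrix.of fun i j => z i ^ (j.rev : ℕ) * (∏ l : Fin j, (t (N + l) - z i)) *
    partitionFunction x y (Fin.snoc (fun i : Fin (N + j) => t i) (z i) : Fin (N + j + 1) → R)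

section Units

variable {K : Type*} [Field K] (x y : K)

lemma borderedMatrix_apply_units {m : ℕ} (N : ℕ) (t : ℕ → Kˣ) (z : Fin m → Kˣ) (i j : Fin m) :
    borderedMatrix N x y (fun l => (t l : K)) (fun i => (z i : K)) i j =
      (z i : K) ^ (m - 1) * ((∏ l : Fin j, (t (N + l) : K)) *
        ((∏ l : Fin j, ((z i : K)⁻¹ - (t (N + l) : K)⁻¹)) * partitionFunction x y fun l =>
          ((Fin.snoc (fun i : Fin (N + j) => t i) (z i) : Fin (N + j + 1) → Kˣ) l : K))) := by
  have hj : m - 1 = j.rev + j := by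
    rw [Fin.val_rev]
    omega
  have hpow : (z i : K) ^ (j : ℕ) = ∏ _l : Fin j, (z i : K) := by simp
  have hprod : (z i : K) ^ (j : ℕ) * ((∏ l : Fin j, (t (N + l) : K)) *
      ∏ l : Fin j, ((z i : K)⁻¹ - (t (N + l) : K)⁻¹)) =
      ∏ l : Fin j, ((t (N + l) : K) - z i) := by
    rw [hpow, ← Finset.prod_mul_distrib, ← Finset.prod_mul_distrib]
    refine Finset.prod_congr rfl fun l _ => ?_
    have := (z i).ne_zero
    have := (t (N + l)).ne_zero
    field_simp
  have hsnoc : (fun l => ((Fin.snoc (fun i : Fin (N + j) => t i) (z i) :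
      Fin (N + j + 1) → Kˣ) l : K)) = Fin.snoc (fun i : Fin (N + j) => (t i : K)) (z i : K) :=
    Fin.comp_snoc Units.val _ _
  rw [borderedMatrix, Matrix.of_apply, ← hprod, hsnoc, hj, pow_add]
  ring

lemma partitionFunction_append_units {m : ℕ} (N : ℕ) (t : ℕ → Kˣ) (z : Fin m → Kˣ)
    (ht : Function.Injective t) (htz : ∀ i l, z i ≠ t l) :
    (∏ i, ∏ j ∈ Finset.Ioi i, (z i - z j : K)) *
        (∏ j : Fin m, partitionFunction x y fun i : Fin (N + j) => (t i : K)) *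
        (∏ j : Fin m, ∏ l : Fin j, (t (N + l) : K)) *
        partitionFunction x y (Fin.append (fun i : Fin N => (t i : K)) fun i => z i) =
      partitionFunction x y (fun i : Fin N => (t i : K)) *
        (borderedMatrix N x y (fun l => (t l : K)) fun i => (z i : K)).det := by
  have key := append_mul_of_mul_det_vandermonde (N := N)
    (V := fun u : Kˣ => complHom (u : K)⁻¹ (x + 1 - y - x * u)) (s := fun u : Kˣ => (u : K)⁻¹)
    (F := fun p => partitionFunction x y fun i => (p i : K))
    (fun p => partitionFunction_mul_det_vandermonde x y p) t z
    (inv_injective.comp (Units.val_injective.comp ht))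
    fun i l h => htz i l (Units.ext (inv_injective h))
  have hdet : (borderedMatrix N x y (fun l => (t l : K)) fun i => (z i : K)).det =
      (∏ i, (z i : K) ^ (m - 1)) * ((∏ j : Fin m, ∏ l : Fin j, (t (N + l) : K)) *
        (Matrix.of fun i j : Fin m => (∏ l : Fin j, ((z i : K)⁻¹ - (t (N + l) : K)⁻¹)) *
          partitionFunction x y fun l =>
            ((Fin.snoc (fun i : Fin (N + j) => t i) (z i) : Fin (N + j + 1) → Kˣ) l : K)).det) := by
    rw [← Matrix.det_mul_row, ← Matrix.det_mul_column]
    exact congrArg Matrix.det (Matrix.ext (borderedMatrix_apply_units x y N t z))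
  have happ : (fun i => ((Fin.append (fun i : Fin N => t i) z i : Kˣ) : K)) =
      Fin.append (fun i : Fin N => (t i : K)) fun i => (z i : K) := comp_append Units.val _ _
  simp only [happ, Function.comp_def] at key
  rw [hdet, ← prod_pow_mul_det_vandermonde_inv _ fun i => (z i).ne_zero]
  linear_combination (∏ i, (z i : K) ^ (m - 1)) *
    (∏ j : Fin m, ∏ l : Fin j, (t (N + l) : K)) * key

end Units

section Map

variable {S : Type*} [CommRing S] (φ : R →+* S)

lemma map_vertexWeight (x y z : R) (h c r : ℤ) :
    φ (vertexWeight x y z h c r) = vertexWeight (φ x) (φ y) (φ z) h c r := by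
  unfold vertexWeight minusWeight
  split_ifs <;> simp

lemma map_rowWeight {n : ℕ} (x y z : R) (h : ℤ) (c r : Fin n → ℤ) :
    φ (rowWeight x y z h c r) = rowWeight (φ x) (φ y) (φ z) h c r := by
  simp [rowWeight, map_vertexWeight, apply_ite φ]

lemma map_partitionFunction {n : ℕ} (x y : R) (z : Fin n → R) :
    φ (partitionFunction x y z) = partitionFunction (φ x) (φ y) (φ ∘ z) := by
  simp only [partitionFunction, rowsSum, map_sum, map_mul, map_prod, map_rowWeight, apply_ite φ,
    map_one, map_zero, Function.comp_apply]

lemma map_borderedMatrix {m : ℕ} (N : ℕ) (x y : R) (t : ℕ → R) (z : Fin m → R) :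
    φ.mapMatrix (borderedMatrix N x y t z) =
      borderedMatrix N (φ x) (φ y) (φ ∘ t) (φ ∘ z) := by
  ext i j
  simp only [borderedMatrix, RingHom.mapMatrix_apply, Matrix.map_apply, Matrix.of_apply, map_mul,
    map_pow, map_prod, map_sub, map_partitionFunction, Fin.comp_snoc, Function.comp_apply]
  rfl

end Map

/-- Every commutative ring is the image of the domain `MvPolynomial R ℤ`, over which the symmetry
is that of the Bethe vectors. -/
lemma partitionFunction_comp_perm (x y : R) {n : ℕ} (z : Fin n → R) (σ : Equiv.Perm (Fin n)) :
    partitionFunction x y (z ∘ σ) = partitionFunction x y z := by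
  let φ : MvPolynomial R ℤ →+* R := MvPolynomial.eval₂Hom (Int.castRingHom R) id
  have hφ (a : R) : φ (MvPolynomial.X a) = a := MvPolynomial.eval₂Hom_X' _ _ a
  have hz : φ ∘ MvPolynomial.X ∘ z = z := funext fun i => hφ (z i)
  have h := congrArg φ (partitionFunction_comp_perm_of_isDomain (MvPolynomial.X x)
    (MvPolynomial.X y) (MvPolynomial.X ∘ z) σ)
  rwa [map_partitionFunction, map_partitionFunction, hφ, hφ, hz, ← Function.comp_assoc,
    hz] at h

lemma partitionFunction_append_of_isDomain [IsDomain R] (x y : R) (N : ℕ) {m : ℕ} (t : ℕ → R)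
    (z : Fin (m + 1) → R) (ht : Function.Injective t) (ht₀ : ∀ l, t l ≠ 0) (hz₀ : ∀ i, z i ≠ 0)
    (htz : ∀ i l, z i ≠ t l) (hF : partitionFunction x y (fun i : Fin N => t i) ≠ 0) :
    (∏ i, ∏ j ∈ Finset.Ioi i, (z i - z j)) *
        (∏ j : Fin m, partitionFunction x y fun i : Fin (N + (j + 1)) => t i) *
        (∏ j : Fin (m + 1), ∏ l : Fin j, t (N + l)) *
        partitionFunction x y (Fin.append (fun i : Fin N => t i) z) =
      (borderedMatrix N x y t z).det := by
  have hι : Function.Injective (algebraMap R (FractionRing R)) := IsFractionRing.injective _ _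
  have hne {a : R} (ha : a ≠ 0) : algebraMap R (FractionRing R) a ≠ 0 :=
    (map_ne_zero_iff _ hι).2 ha
  have key := partitionFunction_append_units (algebraMap R (FractionRing R) x) (algebraMap R _ y)
    N (fun l => Units.mk0 _ (hne (ht₀ l))) (fun i => Units.mk0 _ (hne (hz₀ i)))
    (fun l l' h => ht (hι (congrArg Units.val h)))
    fun i l h => htz i l (hι (congrArg Units.val h))
  have hzero : partitionFunction (algebraMap R (FractionRing R) x) (algebraMap R _ y)
      (fun i : Fin (N + (0 : Fin (m + 1))) => algebraMap R (FractionRing R) (t i)) =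
      partitionFunction (algebraMap R _ x) (algebraMap R _ y)
        fun i : Fin N => algebraMap R (FractionRing R) (t i) := rfl
  simp only [Units.val_mk0, Fin.prod_univ_succ (n := m)
    (fun j => partitionFunction _ _ fun i : Fin (N + j) => algebraMap R _ (t i)), hzero,
    Fin.val_succ] at key
  refine mul_left_cancel₀ hF (hι ?_)
  simp only [map_mul, map_prod, map_sub, map_partitionFunction, RingHom.map_det,
    map_borderedMatrix, comp_append]
  refine Eq.trans ?_ key
  simp only [Function.comp_def]
  ring

lemma partitionFunction_ne_zero {K : Type*} [Field K] (φ : R →+* K) {x y : R} {n : ℕ}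
    {z : Fin n → R} (hx : φ x = 0) (hy : φ y = 1) (hz₀ : ∀ i, φ (z i) ≠ 0)
    (hz : Function.Injective (φ ∘ z)) : partitionFunction x y z ≠ 0 := fun h => by
  have hone := partitionFunction_zero_one (fun i => Units.mk0 _ (hz₀ i))
    fun i j hij => hz (congrArg Units.val hij)
  have hmap := map_partitionFunction φ x y z
  rw [h, hx, hy, map_zero] at hmap
  exact zero_ne_one (hmap.trans hone)

/-- Clearing denominators turns the evaluation into an identity of polynomials, so that `t` may
have equal values. -/
theorem partitionFunction_append (x y : R) (N : ℕ) {m : ℕ} (t : ℕ → R) (z : Fin (m + 1) → R) :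
    (∏ i, ∏ j ∈ Finset.Ioi i, (z i - z j)) *
        (∏ j : Fin m, partitionFunction x y fun i : Fin (N + (j + 1)) => t i) *
        (∏ j : Fin (m + 1), ∏ l : Fin j, t (N + l)) *
        partitionFunction x y (Fin.append (fun i : Fin N => t i) z) =
      (borderedMatrix N x y t z).det := by
  let X (i : Fin 2 ⊕ ℕ ⊕ Fin (m + 1)) : MvPolynomial (Fin 2 ⊕ ℕ ⊕ Fin (m + 1)) ℤ :=
    MvPolynomial.X i
  have hX : Function.Injective X := MvPolynomial.X_injective
  let ψ := MvPolynomial.eval₂Hom (Int.castRingHom ℚ)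
    (Sum.elim ![0, 1] (Sum.elim (fun l : ℕ => (l : ℚ) + 1) (0 : Fin (m + 1) → ℚ)))
  have hψ (l : ℕ) : ψ (X (.inr (.inl l))) = l + 1 := MvPolynomial.eval₂Hom_X' _ _ _
  let φ := MvPolynomial.eval₂Hom (Int.castRingHom R) (Sum.elim ![x, y] (Sum.elim t z))
  have hφ i : φ (X i) = Sum.elim ![x, y] (Sum.elim t z) i := MvPolynomial.eval₂Hom_X' _ _ _
  have key := congrArg φ (partitionFunction_append_of_isDomain (X (.inl 0)) (X (.inl 1)) N
    (fun l => X (.inr (.inl l))) (fun i => X (.inr (.inr i)))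
    (hX.comp (Sum.inr_injective.comp Sum.inl_injective)) (fun _ => MvPolynomial.X_ne_zero _)
    (fun _ => MvPolynomial.X_ne_zero _) (fun i l h => by simpa using hX h)
    (partitionFunction_ne_zero ψ (MvPolynomial.eval₂Hom_X' _ _ _) (MvPolynomial.eval₂Hom_X' _ _ _)
      (fun l => by rw [hψ]; positivity)
      fun l l' h => by simpa [hψ, Fin.ext_iff] using h))
  simp only [map_mul, map_prod, map_sub, map_partitionFunction, RingHom.map_det,
    map_borderedMatrix, comp_append, hφ] at key
  simpa only [Function.comp_def, hφ, Sum.elim_inl, Sum.elim_inr, Matrix.cons_val_zero,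
    Matrix.cons_val_one] using key

/-! ### Alternating sign matrices -/

section AlternatingSignMatrices

variable {n : ℕ}

/-- A row `r` that may stand below the column sums `c` in an alternating sign matrix: the states
of all edges at its entries are `0` or `1`, and its sum is `1`. -/
def IsAdmissibleRow (c r : Fin n → ℤ) : Prop :=
  (∀ j, (partialSum r j = 0 ∨ partialSum r j = 1) ∧ (c j = 0 ∨ c j = 1) ∧
    (c j + r j = 0 ∨ c j + r j = 1)) ∧ ∑ j, r j = 1

lemma rowWeight_zero_of_isAdmissibleRow (x y z : R) {c r : Fin n → ℤ} (h : IsAdmissibleRow c r) :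
    rowWeight x y z 0 c r = x ^ #{j | c j = 1 ∧ partialSum r j = 1} *
      (z ^ #{j | c j = partialSum r j} * minusWeight x y z ^ #{j | r j = -1}) := by
  simp only [rowWeight, vertexWeight, zero_add, if_pos (h.1 _), if_pos h.2,
    Finset.prod_mul_distrib, Finset.prod_ite, Finset.prod_const, one_pow, mul_one, mul_assoc]

lemma rowWeight_zero_of_not_isAdmissibleRow (x y z : R) {c r : Fin n → ℤ}
    (h : ¬IsAdmissibleRow c r) : rowWeight x y z 0 c r = 0 := by
  simp only [rowWeight, zero_add]
  by_cases hsum : ∑ j, r j = 1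
  · obtain ⟨j, hj⟩ := not_forall.1 fun hall => h ⟨hall, hsum⟩
    rw [Finset.prod_eq_zero (Finset.mem_univ j) (if_neg hj), zero_mul]
  · rw [if_neg hsum, mul_zero]

lemma partialSum_column (A : Fin n → Fin n → ℤ) (i j : Fin n) :
    partialSum (fun i' => A i' j) i = columnSumAbove A i j + A i j := by
  have h : univ.filter (fun i' => i' ≤ i) = insert i (univ.filter fun i' => i' < i) := by
    ext a
    simp [le_iff_eq_or_lt]
  rw [partialSum, h, Finset.sum_insert (by simp), add_comm, columnSumAbove]

lemma partialSum_row_eq_zero_or_one {A : Fin n → Fin n → ℤ} (hA : IsASM A) (i j : Fin n) :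
    partialSum (A i) j = 0 ∨ partialSum (A i) j = 1 :=
  hA.2.1 i j

lemma partialSum_column_eq_zero_or_one {A : Fin n → Fin n → ℤ} (hA : IsASM A) (i j : Fin n) :
    partialSum (fun i' => A i' j) i = 0 ∨ partialSum (fun i' => A i' j) i = 1 :=
  hA.2.2.1 i j

lemma columnSumAbove_zero (A : Fin (n + 1) → Fin (n + 1) → ℤ) : columnSumAbove A 0 = 0 := by
  funext j
  simp [columnSumAbove]

lemma columnSumAbove_eq_zero_or_one {A : Fin n → Fin n → ℤ} (hA : IsASM A) (i j : Fin n) :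
    columnSumAbove A i j = 0 ∨ columnSumAbove A i j = 1 := by
  rcases Nat.eq_zero_or_pos (i : ℕ) with h | h
  · refine .inl (Finset.sum_eq_zero fun i' hi' => ?_)
    simp only [Finset.mem_filter, Finset.mem_univ, true_and, Fin.lt_def] at hi'
    omega
  · have hrow : columnSumAbove A i j = partialSum (fun i' => A i' j) ⟨i - 1, by omega⟩ := by
      refine Finset.sum_congr (Finset.filter_congr fun i' _ => ?_) fun _ _ => rfl
      simp only [Fin.lt_def, Fin.le_def]
      omega
    rw [hrow]
    exact partialSum_column_eq_zero_or_one hA _ j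

lemma isASM_iff (A : Fin n → Fin n → ℤ) :
    IsASM A ↔ (∀ i, IsAdmissibleRow (columnSumAbove A i) (A i)) ∧ ∑ i, A i = fun _ => 1 := by
  have hsum : (∑ i, A i = fun _ => 1) ↔ ∀ j, ∑ i, A i j = 1 := by
    simp only [funext_iff, Finset.sum_apply]
  rw [hsum]
  constructor
  · intro h
    exact ⟨fun i => ⟨fun j => ⟨partialSum_row_eq_zero_or_one h i j,
      columnSumAbove_eq_zero_or_one h i j,
      partialSum_column A i j ▸ partialSum_column_eq_zero_or_one h i j⟩, h.2.2.2.1 i⟩, h.2.2.2.2⟩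
  · rintro ⟨h, hc⟩
    have hcol (i j : Fin n) : partialSum (fun i' => A i' j) i = 0 ∨
        partialSum (fun i' => A i' j) i = 1 :=
      (partialSum_column A i j).symm ▸ ((h i).1 j).2.2
    refine ⟨fun i j => ?_, fun i j => ((h i).1 j).1, fun i j => hcol i j, fun i => (h i).2, hc⟩
    have := ((h i).1 j).2
    omega

lemma nuASM_eq_sum {A : Fin n → Fin n → ℤ} (hA : IsASM A) :
    nuASM A = ∑ i, #{j | columnSumAbove A i j = 1 ∧ partialSum (A i) j = 1} := by
  have hsum : (∑ i : Fin n, ∑ i' : Fin n, ∑ j : Fin n, ∑ j' : Fin n,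
      if i < i' ∧ j' ≤ j then A i j * A i' j' else 0) =
      ∑ i, ∑ j, columnSumAbove A i j * partialSum (A i) j := by
    rw [Finset.sum_comm]
    refine Finset.sum_congr rfl fun i' _ => ?_
    rw [Finset.sum_comm]
    refine Finset.sum_congr rfl fun j _ => ?_
    rw [columnSumAbove, partialSum, Finset.sum_filter, Finset.sum_filter, Finset.sum_mul_sum]
    refine Finset.sum_congr rfl fun i _ => Finset.sum_congr rfl fun j' _ => ?_
    rw [ite_zero_mul_ite_zero]
  have hmul (i j : Fin n) : columnSumAbove A i j * partialSum (A i) j =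
      if columnSumAbove A i j = 1 ∧ partialSum (A i) j = 1 then 1 else 0 := by
    rcases columnSumAbove_eq_zero_or_one hA i j with hc | hc <;>
      rcases partialSum_row_eq_zero_or_one hA i j with hr | hr <;> simp [hc, hr]
  simp only [nuASM, hsum, hmul, Finset.sum_boole]
  rw [← Nat.cast_sum, Int.toNat_natCast]

open Classical in
lemma partitionFunction_eq_sum (x y : R) (z : Fin n → R) :
    partitionFunction x y z = ∑ e : Fin n → Fin n → Fin 3,
      if IsASM (asmMat e) then x ^ nuASM (asmMat e) * ∏ i, z i ^ nuRow (asmMat e) i *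
        minusWeight x y (z i) ^ muRow (asmMat e) i else 0 := by
  refine Finset.sum_congr rfl fun e _ => ?_
  change (∏ i, rowWeight x y (z i) 0 (columnSumAbove (asmMat e) i) (asmMat e i)) *
    (if ∑ i, asmMat e i = fun _ => 1 then 1 else 0) = _
  split_ifs with hc h h
  · simp only [rowWeight_zero_of_isAdmissibleRow _ _ _ (((isASM_iff _).1 h).1 _),
      nuASM_eq_sum h, ← Finset.prod_pow_eq_pow_sum, ← Finset.prod_mul_distrib, mul_one]
    rfl
  · obtain ⟨i, hi⟩ := not_forall.1 fun hall => h ((isASM_iff _).2 ⟨hall, hc⟩)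
    rw [Finset.prod_eq_zero (Finset.mem_univ i)
      (rowWeight_zero_of_not_isAdmissibleRow _ _ _ hi), zero_mul]
  · exact absurd ((isASM_iff _).1 h).2 hc
  · rw [mul_zero]

lemma muASM_eq_sum (A : Fin n → Fin n → ℤ) : muASM A = ∑ i, muRow A i := by
  rw [muASM, Finset.card_filter, Fintype.sum_prod_type]
  simp only [muRow, Finset.card_filter]

lemma prod_eq_prod_compl_range_mul {M : Type*} [CommMonoid M] {m : ℕ} {k : Fin m → Fin n}
    (hk : Function.Injective k) (f : Fin n → M) :
    ∏ i, f i = (∏ i ∈ (univ.image k)ᶜ, f i) * ∏ i, f (k i) := by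
  rw [← Finset.prod_compl_mul_prod (univ.image k), Finset.prod_image hk.injOn]

lemma minusWeight_one (x y : R) : minusWeight x y 1 = y := by
  unfold minusWeight
  ring

lemma Zmulti_eq_partitionFunction {m : ℕ} {k : Fin m → Fin n} (hk : Function.Injective k)
    (x y : R) (z : Fin m → R) :
    Zmulti n m k x y z (fun i => minusWeight x y (z i)) =
      partitionFunction x y (Function.extend k z 1) := by
  classical
  rw [partitionFunction_eq_sum]
  refine Finset.sum_congr rfl fun e _ => if_congr Iff.rfl ?_ rfl
  have hmu : muASM (asmMat e) - ∑ i, muRow (asmMat e) (k i) =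
      ∑ i ∈ (univ.image k)ᶜ, muRow (asmMat e) i := by
    rw [muASM_eq_sum, ← Finset.sum_compl_add_sum (univ.image k), Finset.sum_image hk.injOn,
      Nat.add_sub_cancel]
  have hone : ∀ i ∈ (univ.image k)ᶜ, Function.extend k z 1 i = 1 := fun i hi => by
    rw [Function.extend_apply' _ _ _ (by simpa using hi), Pi.one_apply]
  rw [prod_eq_prod_compl_range_mul hk, hmu, mul_assoc, ← Finset.prod_pow_eq_pow_sum]
  simp only [hk.extend_apply]
  congr 2
  refine Finset.prod_congr rfl fun i hi => ?_
  rw [hone i hi, minusWeight_one, one_pow, one_mul]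

lemma exists_eq_single_of_sum_eq_one {r : Fin n → ℤ} (hr : ∀ j, 0 ≤ r j) (hsum : ∑ j, r j = 1) :
    ∃ a, r = Pi.single a 1 := by
  obtain ⟨a, -, ha⟩ := Finset.exists_ne_zero_of_sum_ne_zero (hsum.trans_ne one_ne_zero)
  have hle : 0 ≤ ∑ j ∈ univ.erase a, r j := Finset.sum_nonneg fun j _ => hr j
  have hsplit := Finset.add_sum_erase univ r (Finset.mem_univ a)
  have ha₀ := hr a
  have herase := (Finset.sum_eq_zero_iff_of_nonneg fun j _ => hr j).1
    (show ∑ j ∈ univ.erase a, r j = 0 by omega)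
  refine ⟨a, funext fun j => ?_⟩
  rcases eq_or_ne j a with rfl | hj
  · rw [Pi.single_eq_same]
    omega
  · rw [Pi.single_eq_of_ne hj, herase j (by simp [hj])]

lemma row_zero_eq_single {A : Fin (n + 1) → Fin (n + 1) → ℤ} (hA : IsASM A) :
    ∃ a, A 0 = Pi.single a 1 := by
  refine exists_eq_single_of_sum_eq_one (fun j => ?_) (hA.2.2.2.1 0)
  have h := partialSum_column_eq_zero_or_one hA 0 j
  rw [partialSum_column, columnSumAbove_zero, Pi.zero_apply, zero_add] at h
  omega

lemma rhoT_eq_nuRow {A : Fin (n + 1) → Fin (n + 1) → ℤ} (hA : IsASM A) :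
    rhoT A = nuRow A 0 := by
  obtain ⟨a, ha⟩ := row_zero_eq_single hA
  have hnu : nuRow A 0 = #{j | columnSumAbove A 0 j = partialSum (A 0) j} := rfl
  have hrho : rhoT A = #{j | A 0 j = 0 ∧ ∃ j', j < j' ∧ A 0 j' = 1} := rfl
  rw [hnu, hrho, columnSumAbove_zero]
  congr 1
  refine Finset.filter_congr fun j _ => ?_
  simp only [ha, partialSum, Pi.single_apply, Finset.sum_ite_eq', Finset.mem_filter,
    Finset.mem_univ, true_and, Pi.zero_apply]
  simpa using fun h : j < a => h.ne

lemma muRow_zero {A : Fin (n + 1) → Fin (n + 1) → ℤ} (hA : IsASM A) : muRow A 0 = 0 := by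
  obtain ⟨a, ha⟩ := row_zero_eq_single hA
  rw [muRow, Finset.card_eq_zero, Finset.filter_eq_empty_iff]
  intro j _
  rw [ha, Pi.single_apply]
  split_ifs <;> decide

end AlternatingSignMatrices

/-! ### Specialization -/

lemma partitionFunction_extend_eq (x y : R) {m n : ℕ} {k l : Fin m → Fin n}
    (hk : Function.Injective k) (hl : Function.Injective l) (z : Fin m → R) :
    partitionFunction x y (Function.extend k z 1) =
      partitionFunction x y (Function.extend l z 1) := by
  obtain ⟨σ, hσ⟩ := Equiv.Perm.exists_extending_pair l k hl hk
  rw [← partitionFunction_comp_perm x y (Function.extend k z 1) σ]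
  congr 1
  funext i
  by_cases hi : ∃ a, l a = i
  · obtain ⟨a, rfl⟩ := hi
    rw [Function.comp_apply, hσ, hk.extend_apply, hl.extend_apply]
  · rw [Function.comp_apply, Function.extend_apply' _ _ _ hi, Function.extend_apply']
    · rfl
    · rintro ⟨a, ha⟩
      exact hi ⟨a, σ.injective ((hσ a).trans ha)⟩

lemma extend_natAdd {N m : ℕ} (z : Fin m → R) :
    Function.extend (Fin.natAdd N) z 1 = Fin.append (fun _ : Fin N => 1) z := by
  funext i
  refine Fin.addCases (fun i => ?_) (fun i => ?_) i
  · rw [Fin.append_left, Function.extend_apply', Pi.one_apply]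
    rintro ⟨a, ha⟩
    simp only [Fin.ext_iff, Fin.val_natAdd, Fin.val_castAdd] at ha
    omega
  · rw [Fin.append_right, (Fin.natAdd_injective _ _).extend_apply]

lemma Zmulti_eq_partitionFunction_append (x y : R) {N m : ℕ} {k : Fin m → Fin (N + m)}
    (hk : Function.Injective k) (z : Fin m → R) :
    Zmulti (N + m) m k x y z (fun i => minusWeight x y (z i)) =
      partitionFunction x y (Fin.append (fun _ : Fin N => 1) z) := by
  rw [Zmulti_eq_partitionFunction hk, partitionFunction_extend_eq x y hk
    (Fin.natAdd_injective m N), extend_natAdd]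

lemma Zsing_succ (n : ℕ) (x y a : R) :
    Zsing (n + 1) x y a =
      partitionFunction x y (Fin.snoc (fun _ : Fin n => 1) a : Fin (n + 1) → R) := by
  have h := Zmulti_eq_partitionFunction_append x y (N := n) (m := 1)
    (Function.injective_of_subsingleton fun _ => 0) fun _ => a
  rw [Fin.append_right_eq_snoc] at h
  refine Eq.trans (Finset.sum_congr rfl fun e _ => ?_) h
  by_cases hA : IsASM (asmMat e)
  · simp [hA, rhoT_eq_nuRow, muRow_zero]
  · simp [hA]

lemma Zun_succ (n : ℕ) (x y : R) :
    Zun (n + 1) x y = partitionFunction x y fun _ : Fin (n + 1) => 1 := by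
  refine (Zsing_succ n x y 1).trans ?_
  congr 1
  funext i
  refine Fin.lastCases ?_ (fun i => ?_) i <;> simp

lemma sign_revPerm (m : ℕ) :
    Equiv.Perm.sign (Fin.revPerm : Equiv.Perm (Fin m)) = ∏ j : Fin m, (-1) ^ (j.rev : ℕ) := by
  rw [Equiv.Perm.sign_eq_prod_prod_Ioi]
  refine Finset.prod_congr rfl fun i _ => ?_
  have hinv (j : Fin m) (hj : j ∈ Ioi i) : ¬ Fin.revPerm i < Fin.revPerm j :=
    (Fin.rev_lt_rev.2 (Finset.mem_Ioi.1 hj)).not_gt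
  rw [Finset.prod_congr rfl fun j hj => if_neg (hinv j hj), Finset.prod_const, Fin.card_Ioi,
    Fin.val_rev, Nat.sub_sub, add_comm 1]

lemma det_borderedMatrix_one (N : ℕ) {m : ℕ} (x y : R) (z : Fin m → R) :
    (borderedMatrix N x y 1 z).det = (Matrix.of fun i j : Fin m =>
      z i ^ (j : ℕ) * (z i - 1) ^ (j.rev : ℕ) * partitionFunction x y
        (Fin.snoc (fun _ : Fin (N + j.rev) => 1) (z i) : Fin (N + j.rev + 1) → R)).det := by
  set ε : R := ∏ j : Fin m, (-1) ^ (j.rev : ℕ) with hε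
  have hsign : ((Equiv.Perm.sign (Fin.revPerm : Equiv.Perm (Fin m)) : ℤ) : R) = ε := by
    simp [sign_revPerm, hε]
  have hsq : ε * ε = 1 := by
    rw [hε, ← Finset.prod_mul_distrib]
    exact Finset.prod_eq_one fun j _ => by rw [← mul_pow]; simp
  have hperm := Matrix.det_permute' Fin.revPerm (borderedMatrix N x y 1 z)
  rw [hsign] at hperm
  calc (borderedMatrix N x y 1 z).det
      = ε * ((borderedMatrix N x y 1 z).submatrix id Fin.revPerm).det := by
        rw [hperm, ← mul_assoc, hsq, one_mul]
    _ = _ := by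
        rw [hε, ← Matrix.det_mul_row]
        congr 1
        ext i j
        simp only [borderedMatrix, Matrix.submatrix_apply, Matrix.of_apply, Fin.revPerm_apply,
          Fin.rev_rev, Finset.prod_const, Finset.card_univ, Fintype.card_fin, Pi.one_apply, id]
        rw [← neg_sub 1 (z i), neg_pow (1 - z i)]
        ring

theorem partitionFunction_append_one (x y : R) (N : ℕ) {m : ℕ} (z : Fin (m + 1) → R) :
    (∏ i, ∏ j ∈ Finset.Ioi i, (z i - z j)) *
        (∏ j : Fin m, partitionFunction x y fun _ : Fin (N + (j + 1)) => 1) *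
        partitionFunction x y (Fin.append (fun _ : Fin N => 1) z) =
      (Matrix.of fun i j : Fin (m + 1) =>
        z i ^ (j : ℕ) * (z i - 1) ^ (j.rev : ℕ) * partitionFunction x y
          (Fin.snoc (fun _ : Fin (N + j.rev) => 1) (z i) : Fin (N + j.rev + 1) → R)).det := by
  rw [← det_borderedMatrix_one, ← partitionFunction_append]
  simp only [Pi.one_apply, Finset.prod_const_one, mul_one]

lemma prod_Icc_Zun (N m : ℕ) (x y : R) :
    ∏ i ∈ Finset.Icc 1 m, Zun (N + (m + 1) - i) x y =
      ∏ j : Fin m, partitionFunction x y fun _ : Fin (N + (j + 1)) => 1 := by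
  refine Eq.trans ?_ ((Finset.prod_range fun j => Zun (N + (j + 1)) x y).trans
    (Finset.prod_congr rfl fun j _ => Zun_succ (N + j) x y))
  refine Finset.prod_nbij' (m - ·) (m - ·) ?_ ?_ ?_ ?_ ?_ <;>
    simp only [Finset.mem_Icc, Finset.mem_range]
  case refine_5 =>
    intro i hi
    congr 1
    omega
  all_goals omega

end SixVertex

theorem stmt18_general {R : Type*} [CommRing R] (x y : R) (n m : ℕ) (hm : 1 ≤ m)
    (k : Fin m → Fin n) (hk : Function.Injective k) (z : Fin m → R) :
    (∏ i : Fin m, ∏ j ∈ Finset.Ioi i, (z i - z j)) *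
        (∏ i ∈ Finset.Icc 1 (m - 1), Zun (n - i) x y) *
        Zmulti n m k x y z (fun i => x * z i ^ 2 + (y - x - 1) * z i + 1) =
      Matrix.det (Matrix.of fun i j : Fin m =>
        z i ^ (j : ℕ) * (z i - 1) ^ (m - 1 - (j : ℕ)) *
          Zsing (n - (j : ℕ)) x y (z i)) := by
  have hmn : m ≤ n := by simpa using Fintype.card_le_of_injective k hk
  obtain ⟨m, rfl⟩ := Nat.exists_eq_add_of_le' hm
  obtain ⟨N, rfl⟩ := Nat.exists_eq_add_of_le' hmn
  refine (congrArg _ (SixVertex.Zmulti_eq_partitionFunction_append x y hk z)).trans ?_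
  rw [Nat.add_sub_cancel, SixVertex.prod_Icc_Zun, SixVertex.partitionFunction_append_one]
  congr 1
  ext i j
  have hpow : m - j = j.rev := by
    rw [Fin.val_rev]
    omega
  have hsize : N + (m + 1) - j = N + j.rev + 1 := by
    rw [Fin.val_rev]
    omega
  rw [Matrix.of_apply, Matrix.of_apply, hpow, hsize, SixVertex.Zsing_succ]

/-- Determinantal evaluation of the multi-row ASM generating function at
`w_i = x z_i² + (y−x−1) z_i + 1`, stated for all values of the variables in any
commutative ring, equivalently as an identity of polynomials in
`ℤ[x,y,z_1,…,z_m]`.  The rows `1 ≤ k_1 < … < k_m ≤ n` are encoded by a strictly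
monotone function `k : Fin m → Fin n`; in particular the left-hand side is
independent of the choice of rows. -/
theorem stmt18 {R : Type*} [CommRing R] (x y : R) (n m : ℕ) (hm : 1 ≤ m) (hmn : m ≤ n)
    (k : Fin m → Fin n) (hk : StrictMono k) (z : Fin m → R) :
    (∏ i : Fin m, ∏ j ∈ Finset.Ioi i, (z i - z j)) *
        (∏ i ∈ Finset.Icc 1 (m - 1), Zun (n - i) x y) *
        Zmulti n m k x y z (fun i => x * z i ^ 2 + (y - x - 1) * z i + 1) =
      Matrix.det (Matrix.of fun i j : Fin m =>
        z i ^ (j : ℕ) * (z i - 1) ^ (m - 1 - (j : ℕ)) *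
          Zsing (n - (j : ℕ)) x y (z i)) :=
  stmt18_general x y n m hm k hk.injective z
end

section
/- For every integer n ≥ 1, the polynomial Y_n(x,y;z1,z2,z3,z4) defined below is invariant under exchanging its first and third boundary parameters and under exchanging its second and fourth boundary parameters: Y_n(x,y;z1,z2,z3,z4) = Y_n(x,y;z3,z2,z1,z4) = Y_n(x,y;z1,z4,z3,z2), as identities of polynomials in ℤ[x,y,z1,z2,z3,z4]. -/
open Finset

/-- The top-left corner entry `A_{1,1}` of `A` (which is `0` or `1` for an ASM),
as a natural number. -/
def cornerTL {n : ℕ} (A : Fin n → Fin n → ℤ) : ℕ :=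
  if h : 0 < n then (A ⟨0, h⟩ ⟨0, h⟩).toNat else 0

/-- The top-right corner entry `A_{1,n}` of `A`, as a natural number. -/
def cornerTR {n : ℕ} (A : Fin n → Fin n → ℤ) : ℕ :=
  if h : 0 < n then (A ⟨0, h⟩ ⟨n - 1, Nat.sub_lt h Nat.one_pos⟩).toNat else 0

/-- The bottom-right corner entry `A_{n,n}` of `A`, as a natural number. -/
def cornerBR {n : ℕ} (A : Fin n → Fin n → ℤ) : ℕ :=
  if h : 0 < n then
    (A ⟨n - 1, Nat.sub_lt h Nat.one_pos⟩ ⟨n - 1, Nat.sub_lt h Nat.one_pos⟩).toNat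
  else 0

/-- The bottom-left corner entry `A_{n,1}` of `A`, as a natural number. -/
def cornerBL {n : ℕ} (A : Fin n → Fin n → ℤ) : ℕ :=
  if h : 0 < n then (A ⟨n - 1, Nat.sub_lt h Nat.one_pos⟩ ⟨0, h⟩).toNat else 0

open Classical in
/-- The polynomial `Y_n(x,y;z1,z2,z3,z4)`. -/
noncomputable def Ypoly (n : ℕ) {R : Type*} [CommRing R] (x y z1 z2 z3 z4 : R) : R :=
  ∑ e : Fin n → Fin n → Fin 3,
    if IsASM (asmMat e) then
      x ^ nuASM (asmMat e) *
      y ^ (muASM (asmMat e) + cornerTL (asmMat e) + cornerTR (asmMat e) +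
            cornerBR (asmMat e) + cornerBL (asmMat e)) *
      z1 ^ (rhoT (asmMat e) + cornerTL (asmMat e) - 1) *
      z2 ^ (rhoR (asmMat e) + cornerBR (asmMat e) - 1) *
      z3 ^ (rhoB (asmMat e) + cornerBR (asmMat e) - 1) *
      z4 ^ (rhoL (asmMat e) + cornerTL (asmMat e) - 1) *
      (y * z4 * z1 - (z4 - 1) * (z1 - 1)) ^ (1 - cornerTL (asmMat e)) *
      (y - x * (z1 - 1) * (z2 - 1)) ^ (1 - cornerTR (asmMat e)) *
      (y * z2 * z3 - (z2 - 1) * (z3 - 1)) ^ (1 - cornerBR (asmMat e)) *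
      (y - x * (z3 - 1) * (z4 - 1)) ^ (1 - cornerBL (asmMat e))
    else 0

/-!
Recording the partial row and column sums of an alternating sign matrix on the edges of the square
lattice identifies these matrices with the configurations of the six-vertex model with domain wall
boundary conditions. The vertex weights below are chosen such that, for row parameters
`z1, 1, …, 1, z3` and column parameters `z4, 1, …, 1, z2`, the partition function is `Y_n` times a
power of `y`: interior vertices see only the parameter `1` and contribute `x`, `y` according to `ν`
and `μ`, a side contributes one factor `z` for each noncorner vertex of type `a`, and the corners
contribute the four special factors of `Y_n`.

By the Yang–Baxter equation the transfer matrices of two rows commute, once a scalar is cancelled.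
Hence the partition function is symmetric in its row parameters and, by transposition, in its
column parameters. Both the scalar and the power of `y` can be cancelled in the polynomial ring
`ℤ[x, y, z1, z2, z3, z4]`, from which the identities specialize to every commutative ring.
-/

section SixVertex

variable {S : Type*} [CommRing S]

/-- The `a`-type weight of the six-vertex model, for vertices whose four edges are in the same
state. -/
def aWeight (y z w : S) : S := y * z * w - (z - 1) * (w - 1)

/-- The `b`-type weight of the six-vertex model, for vertices where two lines go straight in
different states. -/
def bWeight (x y z w : S) : S := y - x * (z - 1) * (w - 1)

/-- The factor which a row or column with parameter `z` contributes to the weight of an entry `-1`.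
The full `c`-type weight is `y` for an entry `1` and a product of two such factors for `-1`. -/
def cFactor (x y z : S) : S := (z - 1) * (x * z - 1) + y * z

/-- The weight of a vertex in the six-vertex model, in row and column with parameters `z` and `w`.
The arguments are the states of the left, upper, right and lower edge, in this order. -/
def vertexWeight (x y z w : S) : Bool → Bool → Bool → Bool → S
  | false, false, false, false => x * aWeight y z w
  | true, true, true, true => aWeight y z w
  | false, true, false, true => bWeight x y z w
  | true, false, true, false => bWeight x y z w
  | false, false, true, true => y
  | true, true, false, false => cFactor x y z * cFactor x y w
  | _, _, _, _ => 0

/-- The six-vertex weights of a column vertex with given vertical edge states `v`, `v'`, as an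
operator on the horizontal edge states. -/
def lOperator (x y z w : S) (v v' : Bool) : Matrix Bool Bool S :=
  Matrix.of fun h h' => vertexWeight x y z w h v h' v'

/-- The weight in `rMatrix` of two lines in the same state. -/
def rWeight (x y z z' : S) : S := x * z * z' - (1 + x - y) * z + 1

/-- The `R`-matrix which intertwines two rows with parameters `z` and `z'`. -/
def rMatrix (x y z z' : S) : Matrix (Bool × Bool) (Bool × Bool) S
  | (false, false), (false, false) | (true, true), (true, true) => rWeight x y z z'
  | (false, true), (false, true) => cFactor x y z'
  | (true, false), (true, false) => cFactor x y z
  | (false, true), (true, false) => z' - z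
  | (true, false), (false, true) => x * (z' - z)
  | _, _ => 0

open Kronecker in
/-- The Yang–Baxter equation for two rows with parameters `z` and `z'`. -/
lemma sum_lOperator_kronecker_mul_rMatrix (x y z z' w : S) (v v' : Bool) :
    (∑ u, lOperator x y z w v u ⊗ₖ lOperator x y z' w u v') * rMatrix x y z z' =
      rMatrix x y z z' * ∑ u, lOperator x y z' w v u ⊗ₖ lOperator x y z w u v' := by
  ext ⟨a, b⟩ ⟨c, d⟩
  simp only [Matrix.mul_apply, Fintype.sum_prod_type, Fintype.sum_bool, Matrix.add_apply,
    Matrix.kronecker_apply, lOperator, Matrix.of_apply]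
  cases v <;> cases v' <;> cases a <;> cases b <;> cases c <;> cases d <;>
    simp only [vertexWeight, rMatrix, rWeight, aWeight, bWeight, cFactor] <;> ring

lemma prod_ofFn_mul_of_intertwine {M : Type*} [Monoid M] {n : ℕ} {A B : Fin n → M} {r : M}
    (h : ∀ j, A j * r = r * B j) :
    (List.ofFn A).prod * r = r * (List.ofFn B).prod := by
  induction n with
  | zero => simp
  | succ n ih =>
    rw [List.ofFn_succ, List.ofFn_succ, List.prod_cons, List.prod_cons, mul_assoc,
      ih fun j => h j.succ, ← mul_assoc, h, mul_assoc]

lemma prod_ofFn_sum {A ι : Type*} [Semiring A] [Fintype ι] {n : ℕ} (g : Fin n → ι → A) :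
    (List.ofFn fun j => ∑ k, g j k).prod =
      ∑ p : Fin n → ι, (List.ofFn fun j => g j (p j)).prod := by
  induction n with
  | zero => simp
  | succ n ih =>
    rw [← (Fin.consEquiv fun _ => ι).sum_comp, Fintype.sum_prod_type]
    simp only [List.ofFn_succ, List.prod_cons, ih, Fin.consEquiv_apply, Fin.cons_zero,
      Fin.cons_succ, Finset.sum_mul_sum]

open Kronecker in
lemma prod_ofFn_kronecker {ι κ : Type*} [Fintype ι] [DecidableEq ι] [Fintype κ] [DecidableEq κ]
    {n : ℕ} (A : Fin n → Matrix ι ι S) (B : Fin n → Matrix κ κ S) :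
    (List.ofFn fun j => A j ⊗ₖ B j).prod = (List.ofFn A).prod ⊗ₖ (List.ofFn B).prod := by
  induction n with
  | zero => simp
  | succ n ih => simp only [List.ofFn_succ, List.prod_cons, ih, Matrix.mul_kronecker_mul]

/-- The sequences of states with given first and last state. -/
def pathsBetween {ι : Type*} [Fintype ι] [DecidableEq ι] (n : ℕ) (a b : ι) :
    Finset (Fin (n + 1) → ι) :=
  univ.filter fun p => p 0 = a ∧ p (Fin.last n) = b

lemma prod_ofFn_apply {ι : Type*} [Fintype ι] [DecidableEq ι] {n : ℕ}
    (A : Fin n → Matrix ι ι S) (a b : ι) :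
    (List.ofFn A).prod a b =
      ∑ p ∈ pathsBetween n a b, ∏ k, A k (p k.castSucc) (p k.succ) := by
  simp only [pathsBetween, sum_filter]
  induction n generalizing a with
  | zero =>
    rw [← (Equiv.funUnique (Fin 1) ι).symm.sum_comp]
    simp [Matrix.one_apply, ite_and]
  | succ n ih =>
    rw [← (Fin.consEquiv fun _ => ι).sum_comp, Fintype.sum_prod_type, List.ofFn_succ,
      List.prod_cons, Matrix.mul_apply]
    simp only [ih, mul_sum, Fin.prod_univ_succ, Fin.consEquiv_apply, Fin.cons_zero,
      Fin.castSucc_zero, Fin.cons_succ, ← Fin.succ_castSucc, ← Fin.succ_last, ite_and, mul_ite,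
      mul_zero]
    rw [sum_comm, Fintype.sum_eq_single a (by simp +contextual)]
    simp

/-- The row-to-row transfer matrix. Its rows and columns are indexed by the states of the vertical
edges above and below, and the row is entered from the left in state `false` and left in state
`true` (domain wall boundary conditions). -/
def transferMatrix {n : ℕ} (x y : S) (w : Fin n → S) (z : S) :
    Matrix (Fin n → Bool) (Fin n → Bool) S :=
  Matrix.of fun v v' => (List.ofFn fun j => lOperator x y z (w j) (v j) (v' j)).prod false true

open Kronecker in
lemma transferMatrix_mul_apply {n : ℕ} (x y : S) (w : Fin n → S) (z z' : S)
    (v v' : Fin n → Bool) :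
    (transferMatrix x y w z * transferMatrix x y w z') v v' =
      (List.ofFn fun j =>
        ∑ u, lOperator x y z (w j) (v j) u ⊗ₖ lOperator x y z' (w j) u (v' j)).prod
        (false, false) (true, true) := by
  simp only [prod_ofFn_sum, Matrix.mul_apply, Matrix.sum_apply, prod_ofFn_kronecker,
    Matrix.kronecker_apply]
  rfl

lemma commute_transferMatrix {n : ℕ} {x y z z' : S} (w : Fin n → S)
    (h : IsLeftRegular (rWeight x y z z')) :
    Commute (transferMatrix x y w z) (transferMatrix x y w z') := by
  ext v v'
  have hprod := prod_ofFn_mul_of_intertwine fun j =>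
    sum_lOperator_kronecker_mul_rMatrix x y z z' (w j) (v j) (v' j)
  have hentry := congrFun₂ hprod (false, false) (true, true)
  refine h ?_
  beta_reduce
  rw [transferMatrix_mul_apply, transferMatrix_mul_apply]
  rw [Matrix.mul_apply, Matrix.mul_apply] at hentry
  simpa [Fintype.sum_prod_type, rMatrix, mul_comm] using hentry

/-- The partition function of the six-vertex model with domain wall boundary conditions. The sum is
over the states `h` of the horizontal and `v` of the vertical edges, `h i` and `v j` being the
sequences of states along row `i` and column `j`. -/
def partitionFunction {m n : ℕ} (x y : S) (z : Fin m → S) (w : Fin n → S) : S :=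
  ∑ h ∈ Fintype.piFinset fun _ : Fin m => pathsBetween n false true,
    ∑ v ∈ Fintype.piFinset fun _ : Fin n => pathsBetween m false true,
      ∏ i, ∏ j, vertexWeight x y (z i) (w j)
        (h i j.castSucc) (v j i.castSucc) (h i j.succ) (v j i.succ)

lemma vertexWeight_comm (x y z w : S) (h v h' v' : Bool) :
    vertexWeight x y z w h v h' v' = vertexWeight x y w z v h v' h' := by
  cases h <;> cases v <;> cases h' <;> cases v' <;>
    simp only [vertexWeight, aWeight, bWeight] <;> ring

lemma partitionFunction_comm {m n : ℕ} (x y : S) (z : Fin m → S) (w : Fin n → S) :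
    partitionFunction x y z w = partitionFunction x y w z := by
  rw [partitionFunction, sum_comm]
  refine sum_congr rfl fun v _ => sum_congr rfl fun h _ => ?_
  rw [prod_comm]
  simp only [vertexWeight_comm x y (z _)]

lemma partitionFunction_eq_prod_transferMatrix {m n : ℕ} (x y : S) (z : Fin m → S)
    (w : Fin n → S) :
    partitionFunction x y z w =
      (List.ofFn fun i => transferMatrix x y w (z i)).prod (fun _ => false) (fun _ => true) := by
  rw [partitionFunction, sum_comm, prod_ofFn_apply]
  refine sum_equiv (Equiv.piComm fun _ _ => Bool)
    (by simp [pathsBetween, funext_iff, forall_and]) fun v _ => ?_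
  simp only [transferMatrix, lOperator, Matrix.of_apply, prod_ofFn_apply, prod_univ_sum,
    Equiv.piComm_apply]

theorem partitionFunction_comp_perm {m n : ℕ} {x y : S} {z : Fin m → S} (w : Fin n → S)
    (hz : ∀ i j, i < j → IsLeftRegular (rWeight x y (z i) (z j))) (σ : Equiv.Perm (Fin m)) :
    partitionFunction x y (z ∘ σ) w = partitionFunction x y z w := by
  simp only [partitionFunction_eq_prod_transferMatrix]
  have hcomm : (List.ofFn fun i => transferMatrix x y w (z i)).Pairwise Commute :=
    List.pairwise_ofFn.2 fun i j hij => commute_transferMatrix w (hz i j hij)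
  have hperm := σ.ofFn_comp_perm fun i => transferMatrix x y w (z i)
  exact congrFun₂ (hperm.symm.prod_eq' hcomm).symm _ _

end SixVertex

section AlternatingSequences

lemma partialSum_eq_sum_filter {M : Type*} [AddCommMonoid M] {n : ℕ} (u : Fin n → M)
    (k : Fin (n + 1)) : Fin.partialSum u k = ∑ i with i.castSucc < k, u i := by
  induction k using Fin.induction with
  | zero => simp
  | succ k ih =>
    have hfilter : (univ.filter fun i : Fin n => i.castSucc < k.succ) =
        insert k (univ.filter fun i : Fin n => i.castSucc < k.castSucc) := by
      ext i
      simp [Fin.castSucc_lt_succ_iff, le_iff_eq_or_lt]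
    rw [Fin.partialSum_succ, ih, hfilter, sum_insert (by simp), add_comm]

lemma partialSum_last {M : Type*} [AddCommMonoid M] {n : ℕ} (u : Fin n → M) :
    Fin.partialSum u (Fin.last n) = ∑ i, u i := by
  simp [partialSum_eq_sum_filter, Fin.castSucc_lt_last]

variable {n : ℕ} {u : Fin n → ℤ}

/-- A row or column of an alternating sign matrix: the nonzero entries alternate in sign and
have sum `1`, which is expressed through the partial sums. -/
def IsAlternating (u : Fin n → ℤ) : Prop :=
  (∀ k, Fin.partialSum u k = 0 ∨ Fin.partialSum u k = 1) ∧ Fin.partialSum u (Fin.last n) = 1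

/-- The states of the edges along a row or column of an alternating sign matrix, an edge being in
state `true` if the entries preceding it have sum `1`. -/
def statePath (u : Fin n → ℤ) (k : Fin (n + 1)) : Bool := decide (Fin.partialSum u k = 1)

lemma isAlternating_iff_sum : IsAlternating u ↔
    (∀ j, ∑ i with i ≤ j, u i = 0 ∨ ∑ i with i ≤ j, u i = 1) ∧ ∑ i, u i = 1 := by
  simp [IsAlternating, Fin.forall_fin_succ (n := n), partialSum_eq_sum_filter,
    Fin.castSucc_lt_succ_iff]

lemma statePath_zero (u : Fin n → ℤ) : statePath u 0 = false := by
  simp [statePath]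

lemma exists_mem_eq_one_iff_sum_ne_zero {ι : Type*} {u : ι → ℤ} (h01 : ∀ k, u k = 0 ∨ u k = 1)
    (s : Finset ι) : (∃ k ∈ s, u k = 1) ↔ ∑ k ∈ s, u k ≠ 0 := by
  rw [ne_eq, sum_eq_zero_iff_of_nonneg fun k _ => by rcases h01 k with h | h <;> simp [h]]
  push Not
  refine exists_congr fun k => and_congr_right fun _ => ?_
  rcases h01 k with h | h <;> simp [h]

lemma statePath_succ_of_eq_zero {k : Fin n} (hk : u k = 0) :
    statePath u k.succ = statePath u k.castSucc := by
  rw [statePath, Fin.partialSum_succ, hk, add_zero, statePath]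

namespace IsAlternating

lemma statePath_last (hu : IsAlternating u) : statePath u (Fin.last n) = true := by
  simp [statePath, hu.2]

lemma toInt_statePath (hu : IsAlternating u) (k : Fin (n + 1)) :
    (statePath u k).toInt = Fin.partialSum u k := by
  rcases hu.1 k with h | h <;> simp [statePath, h]

lemma eq_toInt_sub_toInt (hu : IsAlternating u) (k : Fin n) :
    u k = (statePath u k.succ).toInt - (statePath u k.castSucc).toInt := by
  rw [hu.toInt_statePath, hu.toInt_statePath, Fin.partialSum_succ, add_sub_cancel_left]

lemma eq_neg_one_or_zero_or_one (hu : IsAlternating u) (k : Fin n) :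
    u k = -1 ∨ u k = 0 ∨ u k = 1 := by
  rw [hu.eq_toInt_sub_toInt]
  cases statePath u k.succ <;> cases statePath u k.castSucc <;> simp

lemma sum_filter_not_lt (hu : IsAlternating u) (k : Fin (n + 1)) :
    ∑ i with ¬ i.castSucc < k, u i = 1 - Fin.partialSum u k := by
  rw [eq_sub_iff_add_eq', partialSum_eq_sum_filter, sum_filter_add_sum_filter_not,
    ← partialSum_last, hu.2]

lemma apply_zero {u : Fin (n + 1) → ℤ} (hu : IsAlternating u) : u 0 = 0 ∨ u 0 = 1 := by
  rw [hu.eq_toInt_sub_toInt, Fin.castSucc_zero, statePath_zero]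
  cases statePath u (Fin.succ 0) <;> simp

lemma apply_last {u : Fin (n + 1) → ℤ} (hu : IsAlternating u) :
    u (Fin.last n) = 0 ∨ u (Fin.last n) = 1 := by
  rw [hu.eq_toInt_sub_toInt, Fin.succ_last, hu.statePath_last]
  cases statePath u (Fin.last n).castSucc <;> simp

lemma statePath_castSucc_last {u : Fin (n + 1) → ℤ} (hu : IsAlternating u)
    (h : u (Fin.last n) = 0) : statePath u (Fin.last n).castSucc = true := by
  rw [← statePath_succ_of_eq_zero h, Fin.succ_last, hu.statePath_last]

lemma exists_lt_eq_one_iff (hu : IsAlternating u) (h01 : ∀ k, u k = 0 ∨ u k = 1) (j : Fin n) :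
    (∃ k, k < j ∧ u k = 1) ↔ statePath u j.castSucc = true := by
  have h := exists_mem_eq_one_iff_sum_ne_zero h01 (univ.filter fun k => k.castSucc < j.castSucc)
  rw [← partialSum_eq_sum_filter, ← hu.toInt_statePath] at h
  cases hj : statePath u j.castSucc <;> simpa [hj] using h

lemma exists_gt_eq_one_iff (hu : IsAlternating u) (h01 : ∀ k, u k = 0 ∨ u k = 1) (j : Fin n) :
    (∃ k, j < k ∧ u k = 1) ↔ statePath u j.succ = false := by
  have h := exists_mem_eq_one_iff_sum_ne_zero h01 (univ.filter fun k => ¬ k.castSucc < j.succ)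
  rw [hu.sum_filter_not_lt, ← hu.toInt_statePath] at h
  cases hj : statePath u j.succ <;> simpa [hj, Fin.castSucc_lt_succ_iff] using h

end IsAlternating

lemma statePath_injOn : Set.InjOn (statePath (n := n)) {u | IsAlternating u} := by
  intro u hu u' hu' h
  ext k
  rw [hu.eq_toInt_sub_toInt, hu'.eq_toInt_sub_toInt, h]

lemma partialSum_toInt_sub_toInt (p : Fin (n + 1) → Bool) (k : Fin (n + 1)) :
    Fin.partialSum (fun i : Fin n => (p i.succ).toInt - (p i.castSucc).toInt) k =
      (p k).toInt - (p 0).toInt := by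
  induction k using Fin.induction with
  | zero => simp
  | succ k ih => rw [Fin.partialSum_succ, ih, sub_add_sub_cancel']

lemma mem_pathsBetween_false_true_iff {p : Fin (n + 1) → Bool} :
    p ∈ pathsBetween n false true ↔ ∃ u, IsAlternating u ∧ statePath u = p := by
  simp only [pathsBetween, mem_filter, mem_univ, true_and]
  constructor
  · rintro ⟨h0, hlast⟩
    refine ⟨fun i => (p i.succ).toInt - (p i.castSucc).toInt, ⟨fun k => ?_, ?_⟩, ?_⟩
    · cases h : p k <;> simp [partialSum_toInt_sub_toInt, h0, h]
    · simp [partialSum_toInt_sub_toInt, h0, hlast]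
    · ext k
      cases h : p k <;> simp [statePath, partialSum_toInt_sub_toInt, h0, h]
  · rintro ⟨u, hu, rfl⟩
    exact ⟨statePath_zero u, hu.statePath_last⟩

end AlternatingSequences

section AlternatingSignMatrices

variable {n : ℕ} {A : Fin n → Fin n → ℤ}

lemma isASM_iff : IsASM A ↔ (∀ i, IsAlternating (A i)) ∧ ∀ j, IsAlternating (A · j) := by
  constructor
  · rintro ⟨-, hrow, hcol, hrow_sum, hcol_sum⟩
    exact ⟨fun i => isAlternating_iff_sum.2 ⟨hrow i, hrow_sum i⟩,
      fun j => isAlternating_iff_sum.2 ⟨fun i => hcol i j, hcol_sum j⟩⟩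
  · rintro ⟨hrow, hcol⟩
    exact ⟨fun i => (hrow i).eq_neg_one_or_zero_or_one,
      fun i => (isAlternating_iff_sum.1 (hrow i)).1,
      fun i j => (isAlternating_iff_sum.1 (hcol j)).1 i,
      fun i => (isAlternating_iff_sum.1 (hrow i)).2,
      fun j => (isAlternating_iff_sum.1 (hcol j)).2⟩

lemma IsASM.isAlternating_row (hA : IsASM A) (i : Fin n) : IsAlternating (A i) :=
  (isASM_iff.1 hA).1 i

lemma IsASM.isAlternating_col (hA : IsASM A) (j : Fin n) : IsAlternating (A · j) :=
  (isASM_iff.1 hA).2 j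

lemma IsASM.transpose (hA : IsASM A) : IsASM fun i j => A j i :=
  isASM_iff.2 (isASM_iff.1 hA).symm

lemma asmMat_injective : Function.Injective (asmMat (n := n)) := by
  intro e e' h
  ext i j
  simpa [asmMat] using congrFun₂ h i j

lemma IsASM.exists_asmMat_eq (hA : IsASM A) : ∃ e, asmMat e = A := by
  have hentry : ∀ i j, ∃ t : Fin 3, (t : ℤ) - 1 = A i j := fun i j => by
    rcases hA.1 i j with h | h | h
    · exact ⟨0, by simp [h]⟩
    · exact ⟨1, by simp [h]⟩
    · exact ⟨2, by simp [h]⟩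
  choose e he using hentry
  exact ⟨e, funext₂ he⟩

variable {S : Type*} [CommRing S]

/-- The weight of the entry of `A` in row `i` and column `j`, as a vertex of the six-vertex
model. -/
def asmVertexWeight (x y z w : S) (A : Fin n → Fin n → ℤ) (i j : Fin n) : S :=
  vertexWeight x y z w (statePath (A i) j.castSucc) (statePath (A · j) i.castSucc)
    (statePath (A i) j.succ) (statePath (A · j) i.succ)

lemma toInt_sub_toInt_of_vertexWeight_ne_zero {x y z w : S} {h v h' v' : Bool}
    (hne : vertexWeight x y z w h v h' v' ≠ 0) :
    h'.toInt - h.toInt = v'.toInt - v.toInt := by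
  cases h <;> cases v <;> cases h' <;> cases v' <;> simp_all [vertexWeight]

open Classical in
theorem partitionFunction_eq_sum_asm (x y : S) (z w : Fin n → S) :
    partitionFunction x y z w = ∑ e : Fin n → Fin n → Fin 3,
      if IsASM (asmMat e) then ∏ i, ∏ j, asmVertexWeight x y (z i) (w j) (asmMat e) i j
      else 0 := by
  rw [partitionFunction, ← sum_product', ← sum_filter]
  symm
  refine sum_of_injOn
    (fun e => (fun i => statePath (asmMat e i), fun j => statePath (asmMat e · j))) ?_ ?_ ?_
    fun e _ => rfl
  · intro e he e' he' h
    simp only [coe_filter, mem_univ, true_and, Set.mem_ofPred_eq] at he he'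
    refine asmMat_injective (funext fun i => ?_)
    exact statePath_injOn (he.isAlternating_row i) (he'.isAlternating_row i)
      (congrFun (congrArg Prod.fst h) i)
  · intro e he
    simp only [coe_filter, mem_univ, true_and, Set.mem_ofPred_eq] at he
    simp only [coe_product, Set.mem_prod, mem_coe, Fintype.mem_piFinset,
      mem_pathsBetween_false_true_iff]
    exact ⟨fun i => ⟨_, he.isAlternating_row i, rfl⟩, fun j => ⟨_, he.isAlternating_col j, rfl⟩⟩
  · rintro ⟨h, v⟩ hmem hnot
    simp only [mem_product, Fintype.mem_piFinset, mem_pathsBetween_false_true_iff] at hmem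
    obtain ⟨hh, hv⟩ := hmem
    choose A hA hAh using hh
    choose B hB hBv using hv
    contrapose! hnot
    have hice : ∀ i j, A i j = B j i := fun i j => by
      rw [(hA i).eq_toInt_sub_toInt, (hB j).eq_toInt_sub_toInt, hAh, hBv]
      exact toInt_sub_toInt_of_vertexWeight_ne_zero fun h0 =>
        hnot (prod_eq_zero (mem_univ i) (prod_eq_zero (mem_univ j) h0))
    have hcol : ∀ j, (A · j) = B j := fun j => funext fun i => hice i j
    have hASM : IsASM A := isASM_iff.2 ⟨hA, fun j => hcol j ▸ hB j⟩
    obtain ⟨e, rfl⟩ := hASM.exists_asmMat_eq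
    exact ⟨e, by simpa using hASM, Prod.ext (funext hAh)
      (funext fun j => (congrArg statePath (hcol j)).trans (hBv j))⟩

end AlternatingSignMatrices

section Inversions

variable {n : ℕ} {A : Fin n → Fin n → ℤ}

lemma IsASM.nuASM_eq_sum (hA : IsASM A) :
    nuASM A = ∑ i, ∑ j,
      if statePath (A i) j.castSucc = false ∧ statePath (A · j) i.succ = false then 1 else 0 := by
  have hfactor : ∀ i i' j j', (if i < i' ∧ j' ≤ j then A i j * A i' j' else 0) =
      (if j' ≤ j then A i j else 0) * (if i < i' then A i' j' else 0) := by
    intros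
    split_ifs <;> simp_all
  have hright : ∀ i j', ∑ j with j' ≤ j, A i j = 1 - (statePath (A i) j'.castSucc).toInt :=
    fun i j' => by
      simpa [(hA.isAlternating_row i).toInt_statePath] using
        (hA.isAlternating_row i).sum_filter_not_lt j'.castSucc
  have hbelow : ∀ i j', ∑ i' with i < i', A i' j' = 1 - (statePath (A · j') i.succ).toInt :=
    fun i j' => by
      simpa [(hA.isAlternating_col j').toInt_statePath, Fin.castSucc_lt_succ_iff] using
        (hA.isAlternating_col j').sum_filter_not_lt i.succ
  have hcast : (∑ i, ∑ i', ∑ j, ∑ j', if i < i' ∧ j' ≤ j then A i j * A i' j' else 0) =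
      ((∑ i, ∑ j', if statePath (A i) j'.castSucc = false ∧ statePath (A · j') i.succ = false
        then 1 else 0 : ℕ) : ℤ) := by
    push_cast
    refine sum_congr rfl fun i _ => ?_
    simp only [hfactor]
    rw [sum_comm_cycle]
    refine sum_congr rfl fun j' _ => ?_
    rw [sum_comm, ← sum_mul_sum, ← sum_filter, ← sum_filter, hright, hbelow]
    cases statePath (A i) j'.castSucc <;> cases statePath (A · j') i.succ <;> simp
  rw [nuASM, hcast, Int.toNat_natCast]

lemma muASM_eq_sum (A : Fin n → Fin n → ℤ) :
    muASM A = ∑ i, ∑ j, if A i j = -1 then 1 else 0 := by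
  rw [muASM, card_filter, Fintype.sum_prod_type]

end Inversions

section BoundaryStatistics

/-- The vertex in row `i` and column `j` is of type `a`: its four edges are in the same state. -/
abbrev IsTypeA {n : ℕ} (A : Fin n → Fin n → ℤ) (i j : Fin n) : Prop :=
  A i j = 0 ∧ statePath (A i) j.castSucc = statePath (A · j) i.castSucc

lemma isTypeA_transpose {n : ℕ} {A : Fin n → Fin n → ℤ} {i j : Fin n} :
    IsTypeA (fun i j => A j i) j i ↔ IsTypeA A i j :=
  and_congr_right fun _ => eq_comm

variable {n : ℕ} {A : Fin (n + 1) → Fin (n + 1) → ℤ}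

lemma isTypeA_zero_left_iff {j : Fin (n + 1)} :
    IsTypeA A 0 j ↔ A 0 j = 0 ∧ statePath (A 0) j.castSucc = false := by
  rw [IsTypeA, Fin.castSucc_zero, statePath_zero]

lemma isTypeA_zero_zero_iff : IsTypeA A 0 0 ↔ A 0 0 = 0 := by
  rw [isTypeA_zero_left_iff, Fin.castSucc_zero, statePath_zero, and_iff_left rfl]

namespace IsASM

lemma isTypeA_last_left_iff (hA : IsASM A) {j : Fin (n + 1)} :
    IsTypeA A (Fin.last n) j ↔
      A (Fin.last n) j = 0 ∧ statePath (A (Fin.last n)) j.castSucc = true :=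
  and_congr_right fun h => by rw [(hA.isAlternating_col j).statePath_castSucc_last h]

lemma isTypeA_last_last_iff (hA : IsASM A) :
    IsTypeA A (Fin.last n) (Fin.last n) ↔ A (Fin.last n) (Fin.last n) = 0 := by
  rw [hA.isTypeA_last_left_iff, and_iff_left_of_imp]
  exact (hA.isAlternating_row _).statePath_castSucc_last

lemma not_isTypeA_zero_last (hA : IsASM A) : ¬ IsTypeA A 0 (Fin.last n) := by
  rw [isTypeA_zero_left_iff]
  rintro ⟨h0, hfalse⟩
  simp [(hA.isAlternating_row 0).statePath_castSucc_last h0] at hfalse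

lemma not_isTypeA_last_zero (hA : IsASM A) : ¬ IsTypeA A (Fin.last n) 0 :=
  fun h => hA.transpose.not_isTypeA_zero_last (isTypeA_transpose.2 h)

lemma rhoT_eq_card (hA : IsASM A) : rhoT A = #{j | IsTypeA A 0 j} := by
  refine congrArg card (filter_congr fun j _ => ?_)
  rw [isTypeA_zero_left_iff]
  refine and_congr_right fun h0 => ?_
  rw [← statePath_succ_of_eq_zero (u := A 0) h0]
  exact (hA.isAlternating_row 0).exists_gt_eq_one_iff
    (fun k => (hA.isAlternating_col k).apply_zero) j

lemma rhoB_eq_card (hA : IsASM A) : rhoB A = #{j | IsTypeA A (Fin.last n) j} := by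
  refine congrArg card (filter_congr fun j _ => ?_)
  rw [hA.isTypeA_last_left_iff]
  exact and_congr_right fun _ => (hA.isAlternating_row _).exists_lt_eq_one_iff
    (fun k => (hA.isAlternating_col k).apply_last) j

end IsASM

@[to_additive]
lemma prod_univ_ends {M : Type*} [CommMonoid M] {m : ℕ} (f : Fin (m + 2) → M) :
    ∏ j, f j = f 0 * (∏ j : Fin m, f j.castSucc.succ) * f (Fin.last (m + 1)) := by
  rw [Fin.prod_univ_succ, Fin.prod_univ_castSucc, mul_assoc, Fin.succ_last]

end BoundaryStatistics

section ReducedExponents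

variable {m : ℕ} {A : Fin (m + 2) → Fin (m + 2) → ℤ}

namespace IsASM

lemma rhoT_add_cornerTL_sub_one (hA : IsASM A) :
    rhoT A + cornerTL A - 1 = #{j : Fin m | IsTypeA A 0 j.castSucc.succ} := by
  have hcorner : cornerTL A = (A 0 0).toNat := dif_pos (Nat.succ_pos _)
  rw [hA.rhoT_eq_card, card_filter, sum_univ_ends, if_neg hA.not_isTypeA_zero_last, card_filter,
    hcorner]
  rcases (hA.isAlternating_row 0).apply_zero with h | h <;> simp [isTypeA_zero_zero_iff, h]

lemma rhoL_add_cornerTL_sub_one (hA : IsASM A) :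
    rhoL A + cornerTL A - 1 = #{i : Fin m | IsTypeA A i.castSucc.succ 0} :=
  hA.transpose.rhoT_add_cornerTL_sub_one.trans (by simp only [isTypeA_transpose])

lemma rhoB_add_cornerBR_sub_one (hA : IsASM A) :
    rhoB A + cornerBR A - 1 = #{j : Fin m | IsTypeA A (Fin.last _) j.castSucc.succ} := by
  have hcorner : cornerBR A = (A (Fin.last _) (Fin.last _)).toNat := dif_pos (Nat.succ_pos _)
  rw [hA.rhoB_eq_card, card_filter, sum_univ_ends, if_neg hA.not_isTypeA_last_zero, card_filter,
    hcorner]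
  rcases (hA.isAlternating_row (Fin.last _)).apply_last with h | h <;>
    simp [hA.isTypeA_last_last_iff, h]

lemma rhoR_add_cornerBR_sub_one (hA : IsASM A) :
    rhoR A + cornerBR A - 1 = #{i : Fin m | IsTypeA A i.castSucc.succ (Fin.last _)} :=
  hA.transpose.rhoB_add_cornerBR_sub_one.trans (by simp only [isTypeA_transpose])

end IsASM

end ReducedExponents

section ReducedWeights

variable {S : Type*} [CommRing S]

/-- What is left of the weight of a vertex of an alternating sign matrix after taking out the
factors `x` and `y` which are counted by `ν` and `μ`. -/
def reducedWeight {n : ℕ} (x y z w : S) (A : Fin n → Fin n → ℤ) (i j : Fin n) : S :=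
  if IsTypeA A i j then aWeight y z w else if A i j = 0 then bWeight x y z w else y

variable {n : ℕ} {A : Fin n → Fin n → ℤ} {i j : Fin n}

lemma IsASM.asmVertexWeight_eq (hA : IsASM A) {x y z w : S}
    (hneg : A i j = -1 → z = 1 ∧ w = 1) :
    asmVertexWeight x y z w A i j =
      x ^ (if statePath (A i) j.castSucc = false ∧ statePath (A · j) i.succ = false then 1 else 0) *
        y ^ (if A i j = -1 then 1 else 0) * reducedWeight x y z w A i j := by
  have hrow := (hA.isAlternating_row i).eq_toInt_sub_toInt j
  have hcol := (hA.isAlternating_col j).eq_toInt_sub_toInt i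
  simp only [asmVertexWeight, reducedWeight, IsTypeA]
  cases h : statePath (A i) j.castSucc <;> cases h' : statePath (A i) j.succ <;>
    cases v : statePath (A · j) i.castSucc <;> cases v' : statePath (A · j) i.succ <;>
    simp_all [vertexWeight, cFactor]

lemma reducedWeight_transpose (x y z w : S) (A : Fin n → Fin n → ℤ) (i j : Fin n) :
    reducedWeight x y z w (fun i j => A j i) j i = reducedWeight x y w z A i j := by
  have ha : aWeight y z w = aWeight y w z := by simp only [aWeight]; ring
  have hb : bWeight x y z w = bWeight x y w z := by simp only [bWeight]; ring
  simp only [reducedWeight, isTypeA_transpose, ha, hb]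

lemma reducedWeight_one_right (x y z : S) (A : Fin n → Fin n → ℤ) (i j : Fin n) :
    reducedWeight x y z 1 A i j = y * z ^ (if IsTypeA A i j then 1 else 0) := by
  simp only [reducedWeight, aWeight, bWeight]
  split_ifs <;> simp

lemma prod_reducedWeight_one_right (x y z : S) (A : Fin n → Fin n → ℤ) (i : Fin n) {m : ℕ}
    (f : Fin m → Fin n) :
    ∏ j, reducedWeight x y z 1 A i (f j) = y ^ m * z ^ #{j | IsTypeA A i (f j)} := by
  simp only [reducedWeight_one_right, prod_mul_distrib, prod_const, card_univ, Fintype.card_fin,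
    prod_pow_eq_pow_sum, card_filter]

lemma prod_reducedWeight_one_left (x y w : S) (A : Fin n → Fin n → ℤ) (j : Fin n) {m : ℕ}
    (f : Fin m → Fin n) :
    ∏ i, reducedWeight x y 1 w A (f i) j = y ^ m * w ^ #{i | IsTypeA A (f i) j} := by
  simp only [← reducedWeight_transpose x y w, prod_reducedWeight_one_right, isTypeA_transpose]

lemma reducedWeight_eq_mul_aWeight_pow (x y z w : S) (h01 : A i j = 0 ∨ A i j = 1)
    (ha : IsTypeA A i j ↔ A i j = 0) :
    reducedWeight x y z w A i j = y ^ (A i j).toNat * aWeight y z w ^ (1 - (A i j).toNat) := by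
  rcases h01 with h | h <;> simp [reducedWeight, ha, h]

lemma reducedWeight_eq_mul_bWeight_pow (x y z w : S) (h01 : A i j = 0 ∨ A i j = 1)
    (ha : ¬ IsTypeA A i j) :
    reducedWeight x y z w A i j = y ^ (A i j).toNat * bWeight x y z w ^ (1 - (A i j).toNat) := by
  rcases h01 with h | h <;> simp [reducedWeight, ha, h]

end ReducedWeights

section BoundaryParameters

variable {S : Type*} [CommRing S] {m : ℕ}

/-- The parameters `p, 1, …, 1, q`. -/
def boundaryParams (p q : S) (i : Fin (m + 2)) : S :=
  if i = 0 then p else if i = Fin.last (m + 1) then q else 1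

lemma boundaryParams_zero (p q : S) : boundaryParams p q (0 : Fin (m + 2)) = p := if_pos rfl

lemma boundaryParams_last (p q : S) : boundaryParams p q (Fin.last (m + 1)) = q := by
  simp [boundaryParams]

lemma boundaryParams_of_ne (p q : S) {i : Fin (m + 2)} (h0 : i ≠ 0) (hlast : i ≠ Fin.last (m + 1)) :
    boundaryParams p q i = 1 := by
  simp [boundaryParams, h0, hlast]

lemma boundaryParams_castSucc_succ (p q : S) (i : Fin m) :
    boundaryParams p q i.castSucc.succ = 1 :=
  boundaryParams_of_ne p q (Fin.succ_ne_zero _) (by simp [← Fin.succ_last, Fin.castSucc_ne_last])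

lemma boundaryParams_comp_swap (p q : S) :
    boundaryParams p q ∘ Equiv.swap 0 (Fin.last (m + 1)) = boundaryParams q p := by
  funext i
  by_cases h0 : i = 0
  · simp [h0, boundaryParams]
  by_cases hlast : i = Fin.last (m + 1)
  · simp [hlast, boundaryParams]
  · simp [Equiv.swap_apply_of_ne_of_ne h0 hlast, boundaryParams_of_ne, h0, hlast]

variable {A : Fin (m + 2) → Fin (m + 2) → ℤ}

lemma IsASM.boundaryParams_eq_one (hA : IsASM A) {i j : Fin (m + 2)} (h : A i j = -1) (p q : S) :
    boundaryParams p q i = 1 := by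
  refine boundaryParams_of_ne p q ?_ ?_ <;> rintro rfl
  · have hfirst := (hA.isAlternating_col j).apply_zero
    omega
  · have hlast := (hA.isAlternating_col j).apply_last
    omega

lemma IsASM.prod_asmVertexWeight (hA : IsASM A) (x y z1 z2 z3 z4 : S) :
    ∏ i, ∏ j, asmVertexWeight x y (boundaryParams z1 z3 i) (boundaryParams z4 z2 j) A i j =
      x ^ nuASM A * y ^ muASM A *
        ∏ i, ∏ j, reducedWeight x y (boundaryParams z1 z3 i) (boundaryParams z4 z2 j) A i j := by
  have hcell := fun i j => hA.asmVertexWeight_eq (i := i) (j := j) (x := x) (y := y)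
    (z := boundaryParams z1 z3 i) (w := boundaryParams z4 z2 j) fun h =>
    ⟨hA.boundaryParams_eq_one h z1 z3, hA.transpose.boundaryParams_eq_one h z4 z2⟩
  simp only [hcell, prod_mul_distrib, prod_pow_eq_pow_sum, hA.nuASM_eq_sum, muASM_eq_sum]

lemma IsASM.prod_reducedWeight (hA : IsASM A) (x y z1 z2 z3 z4 : S) :
    ∏ i, ∏ j, reducedWeight x y (boundaryParams z1 z3 i) (boundaryParams z4 z2 j) A i j =
      y ^ (m * m + 4 * m) *
        y ^ (cornerTL A + cornerTR A + cornerBR A + cornerBL A) *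
        (z1 ^ (rhoT A + cornerTL A - 1) * z2 ^ (rhoR A + cornerBR A - 1) *
          z3 ^ (rhoB A + cornerBR A - 1) * z4 ^ (rhoL A + cornerTL A - 1)) *
        (aWeight y z1 z4 ^ (1 - cornerTL A) * bWeight x y z1 z2 ^ (1 - cornerTR A) *
          aWeight y z3 z2 ^ (1 - cornerBR A) * bWeight x y z3 z4 ^ (1 - cornerBL A)) := by
  have hTL : cornerTL A = (A 0 0).toNat := dif_pos (Nat.succ_pos _)
  have hTR : cornerTR A = (A 0 (Fin.last _)).toNat := dif_pos (Nat.succ_pos _)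
  have hBR : cornerBR A = (A (Fin.last _) (Fin.last _)).toNat := dif_pos (Nat.succ_pos _)
  have hBL : cornerBL A = (A (Fin.last _) 0).toNat := dif_pos (Nat.succ_pos _)
  have htop : ∀ j, A 0 j = 0 ∨ A 0 j = 1 := fun j => (hA.isAlternating_col j).apply_zero
  have hbottom : ∀ j, A (Fin.last _) j = 0 ∨ A (Fin.last _) j = 1 := fun j =>
    (hA.isAlternating_col j).apply_last
  rw [hA.rhoT_add_cornerTL_sub_one, hA.rhoR_add_cornerBR_sub_one, hA.rhoB_add_cornerBR_sub_one,
    hA.rhoL_add_cornerTL_sub_one, hTL, hTR, hBR, hBL]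
  simp only [prod_univ_ends, boundaryParams_zero, boundaryParams_last,
    boundaryParams_castSucc_succ, prod_mul_distrib, prod_reducedWeight_one_right,
    prod_reducedWeight_one_left]
  rw [reducedWeight_eq_mul_aWeight_pow x y z1 z4 (htop _) isTypeA_zero_zero_iff,
    reducedWeight_eq_mul_bWeight_pow x y z1 z2 (htop _) hA.not_isTypeA_zero_last,
    reducedWeight_eq_mul_aWeight_pow x y z3 z2 (hbottom _) hA.isTypeA_last_last_iff,
    reducedWeight_eq_mul_bWeight_pow x y z3 z4 (hbottom _) hA.not_isTypeA_last_zero]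
  simp only [one_pow, mul_one, prod_const, card_univ, Fintype.card_fin]
  ring

/-- The `m * m` interior entries and the `4 * m` noncorner entries of the boundary contribute a
factor `y` each. -/
theorem Ypoly_mul_pow (x y z1 z2 z3 z4 : S) :
    Ypoly (m + 2) x y z1 z2 z3 z4 * y ^ (m * m + 4 * m) =
      partitionFunction x y (boundaryParams (m := m) z1 z3) (boundaryParams (m := m) z4 z2) := by
  rw [Ypoly, partitionFunction_eq_sum_asm, sum_mul]
  refine sum_congr rfl fun e _ => ?_
  split_ifs with hA
  · rw [hA.prod_asmVertexWeight, hA.prod_reducedWeight]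
    simp only [aWeight, bWeight]
    ring
  · rw [zero_mul]

end BoundaryParameters

section Symmetry

variable {S : Type*} [CommRing S]

lemma Ypoly_swap_z1_z3 {x y : S} (hy : IsRegular y)
    (hr : ∀ z z', IsLeftRegular (rWeight x y z z')) (m : ℕ) (z1 z2 z3 z4 : S) :
    Ypoly (m + 2) x y z1 z2 z3 z4 = Ypoly (m + 2) x y z3 z2 z1 z4 := by
  refine hy.right.pow (m * m + 4 * m) ?_
  beta_reduce
  rw [Ypoly_mul_pow, Ypoly_mul_pow, ← boundaryParams_comp_swap z1 z3,
    partitionFunction_comp_perm _ fun _ _ _ => hr _ _]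

lemma Ypoly_swap_z2_z4 {x y : S} (hy : IsRegular y)
    (hr : ∀ z z', IsLeftRegular (rWeight x y z z')) (m : ℕ) (z1 z2 z3 z4 : S) :
    Ypoly (m + 2) x y z1 z2 z3 z4 = Ypoly (m + 2) x y z1 z4 z3 z2 := by
  refine hy.right.pow (m * m + 4 * m) ?_
  beta_reduce
  rw [Ypoly_mul_pow, Ypoly_mul_pow, partitionFunction_comm, ← boundaryParams_comp_swap z2 z4,
    partitionFunction_comp_perm _ fun _ _ _ => hr _ _, partitionFunction_comm]

lemma isASM_asmMat_fin_one_iff {e : Fin 1 → Fin 1 → Fin 3} :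
    IsASM (asmMat e) ↔ e = fun _ _ => 2 := by
  simp only [isASM_iff, isAlternating_iff_sum, asmMat, funext_iff, Fin.ext_iff,
    le_of_subsingleton, filter_true, univ_unique, Fin.default_eq_zero, sum_sub_distrib,
    sum_singleton, sum_const, card_singleton, Int.nsmul_eq_mul, Nat.cast_one, mul_one,
    forall_const, Fin.forall_fin_one, and_self, Fin.coe_ofNat_eq_mod, Nat.mod_succ]
  lia

lemma Ypoly_one (x y z1 z2 z3 z4 : S) : Ypoly 1 x y z1 z2 z3 z4 = y ^ 4 := by
  simp [Ypoly, isASM_asmMat_fin_one_iff, nuASM, muASM, rhoT, rhoR, rhoB, rhoL, cornerTL,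
    cornerTR, cornerBR, cornerBL, asmMat]

lemma map_Ypoly {T : Type*} [CommRing T] (f : S →+* T) (n : ℕ) (x y z1 z2 z3 z4 : S) :
    f (Ypoly n x y z1 z2 z3 z4) = Ypoly n (f x) (f y) (f z1) (f z2) (f z3) (f z4) := by
  simp only [Ypoly, map_sum, apply_ite f, map_mul, map_pow, map_sub, map_one, map_zero]

open MvPolynomial in
lemma rWeight_X_ne_zero (z z' : MvPolynomial (Fin 6) ℤ) : rWeight (X 0) (X 1) z z' ≠ 0 := by
  intro h
  have heval := congrArg (eval ![0, 1, 0, 0, 0, 0]) h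
  simp [rWeight] at heval

end Symmetry

/-- Symmetry of `Y_n` under exchanging `z1 ↔ z3` and under exchanging
`z2 ↔ z4`, stated for all values of the variables in any commutative ring,
equivalently as identities of polynomials in `ℤ[x,y,z1,z2,z3,z4]`. -/
theorem stmt19 {R : Type*} [CommRing R] (x y z1 z2 z3 z4 : R) (n : ℕ) (hn : 1 ≤ n) :
    Ypoly n x y z1 z2 z3 z4 = Ypoly n x y z3 z2 z1 z4 ∧
      Ypoly n x y z1 z2 z3 z4 = Ypoly n x y z1 z4 z3 z2 := by
  obtain _ | _ | m := n
  · exact absurd hn (by decide)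
  · simp [Ypoly_one]
  · have hy : IsRegular (MvPolynomial.X 1 : MvPolynomial (Fin 6) ℤ) :=
      .of_ne_zero (MvPolynomial.X_ne_zero 1)
    have hr : ∀ z z' : MvPolynomial (Fin 6) ℤ,
        IsLeftRegular (rWeight (MvPolynomial.X 0) (MvPolynomial.X 1) z z') := fun z z' =>
      (IsRegular.of_ne_zero (rWeight_X_ne_zero z z')).left
    let f := MvPolynomial.eval₂Hom (Int.castRingHom R) ![x, y, z1, z2, z3, z4]
    have h13 := congrArg f (Ypoly_swap_z1_z3 hy hr m (.X 2) (.X 3) (.X 4) (.X 5))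
    have h24 := congrArg f (Ypoly_swap_z2_z4 hy hr m (.X 2) (.X 3) (.X 4) (.X 5))
    simp only [map_Ypoly, f, MvPolynomial.coe_eval₂Hom, MvPolynomial.eval₂_X] at h13 h24
    exact ⟨h13, h24⟩
end
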